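/- Let k ≥ 4 be an even integer such that every plane graph H with Δ*(H) ≤ k has a cyclic colouring using at most (3/2)k colours. Then for every planar simple graph G satisfying χ_k(G) ≤ ⌊(Δ(G) − 1)/k⌋ + 3, we have χ(G²) = χ_1(G) ≤ ⌊(3/2)·Δ(G)⌋ + (9/2)k − 1. -/

import Mathlib

open SimpleGraph

/-- A drawing of a simple graph in the plane: vertices are mapped to distinct points,
edges to arcs (injective continuous curves parametrised on `[0,1]`) joining the images of
their endpoints, whose interiors avoid the vertex points and each other. -/
structure PlaneEmbedding {V : Type*} (G : SimpleGraph V) where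
  pos : V → ℝ × ℝ
  inj : Function.Injective pos
  arc : G.edgeSet → ℝ → ℝ × ℝ
  arc_cont : ∀ e, ContinuousOn (arc e) (Set.Icc 0 1)
  arc_inj : ∀ e, Set.InjOn (arc e) (Set.Icc 0 1)
  arc_ends : ∀ e : G.edgeSet, ∃ u v : V, (e : Sym2 V) = s(u, v) ∧
      arc e 0 = pos u ∧ arc e 1 = pos v
  arc_avoid : ∀ e : G.edgeSet, ∀ t ∈ Set.Ioo (0:ℝ) 1, arc e t ∉ Set.range pos
  arc_disjoint : ∀ e f : G.edgeSet, e ≠ f → ∀ s ∈ Set.Ioo (0:ℝ) 1, ∀ t ∈ Set.Ioo (0:ℝ) 1,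
      arc e s ≠ arc f t

/-- A graph is planar if it admits a drawing in the plane. -/
def SimpleGraph.IsPlanar {V : Type*} (G : SimpleGraph V) : Prop :=
  Nonempty (PlaneEmbedding G)

/-- A `k`-frugal colouring: a proper vertex colouring in which no colour appears more than
`k` times in the neighbourhood of any vertex. -/
def SimpleGraph.IsFrugalColoring {V α : Type*} (G : SimpleGraph V) (k : ℕ) (c : V → α) : Prop :=
  (∀ u v, G.Adj u v → c u ≠ c v) ∧
  ∀ (v : V) (a : α), {u | u ∈ G.neighborSet v ∧ c u = a}.ncard ≤ k

/-- The `k`-frugal chromatic number `χ_k(G)`: the least number of colours in a `k`-frugal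
colouring of `G`. -/
noncomputable def SimpleGraph.frugalChromaticNumber {V : Type*} (G : SimpleGraph V) (k : ℕ) : ℕ :=
  sInf {n : ℕ | ∃ c : V → ℕ, (∀ v, c v < n) ∧ G.IsFrugalColoring k c}

/-- The square of a graph: two distinct vertices are adjacent iff they are at distance
at most two in `G`. -/
def SimpleGraph.square {V : Type*} (G : SimpleGraph V) : SimpleGraph V :=
  SimpleGraph.fromRel (fun u v => G.Adj u v ∨ ∃ w, G.Adj u w ∧ G.Adj w v)

/-- The set of points of the plane used by a drawing of a graph. -/
def PlaneEmbedding.drawing {V : Type*} {G : SimpleGraph V} (emb : PlaneEmbedding G) :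
    Set (ℝ × ℝ) :=
  Set.range emb.pos ∪ ⋃ e : G.edgeSet, emb.arc e '' Set.Icc 0 1

/-- A face of a plane drawing: a connected component of the complement of the drawing. -/
def PlaneEmbedding.IsFace {V : Type*} {G : SimpleGraph V} (emb : PlaneEmbedding G)
    (F : Set (ℝ × ℝ)) : Prop :=
  ∃ x ∉ emb.drawing, F = connectedComponentIn emb.drawingᶜ x

/-- A vertex is incident with a face if its point lies on the boundary (closure) of
the face. -/
def PlaneEmbedding.IncidentFace {V : Type*} {G : SimpleGraph V} (emb : PlaneEmbedding G)
    (v : V) (F : Set (ℝ × ℝ)) : Prop :=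
  emb.pos v ∈ closure F

/-- `Δ*(emb) ≤ k` : every face of the plane drawing is incident with at most `k` vertices. -/
def PlaneEmbedding.MaxFaceSizeLE {V : Type*} {G : SimpleGraph V} (emb : PlaneEmbedding G)
    (k : ℕ) : Prop :=
  ∀ F, emb.IsFace F → {v : V | emb.IncidentFace v F}.ncard ≤ k

/-- A cyclic colouring of a plane graph with at most `n` colours: any two distinct vertices
incident with a common face get distinct colours. -/
def PlaneEmbedding.HasCyclicColoring {V : Type*} {G : SimpleGraph V} (emb : PlaneEmbedding G)
    (n : ℕ) : Prop :=
  ∃ c : V → ℕ, (∀ v, c v < n) ∧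
    ∀ F, emb.IsFace F → ∀ u v, u ≠ v →
      emb.IncidentFace u F → emb.IncidentFace v F → c u ≠ c v

namespace GridMap

/-- Two points of the integer lattice at distance one. -/
def LatticeAdj (u v : ℤ × ℤ) : Prop :=
  (u.1 = v.1 ∧ (v.2 = u.2 + 1 ∨ u.2 = v.2 + 1)) ∨ (u.2 = v.2 ∧ (v.1 = u.1 + 1 ∨ u.1 = v.1 + 1))

/-- `w` is a corner of the unit cell whose lower left corner is `p`. -/
def Corner (p w : ℤ × ℤ) : Prop :=
  (w.1 = p.1 ∨ w.1 = p.1 + 1) ∧ (w.2 = p.2 ∨ w.2 = p.2 + 1)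

/-- The unit cells `p` and `q` share the lattice edge `ab`. -/
inductive Across : ℤ × ℤ → ℤ × ℤ → ℤ × ℤ → ℤ × ℤ → Prop
  | right (i j : ℤ) : Across (i, j) (i + 1, j) (i + 1, j) (i + 1, j + 1)
  | up (i j : ℤ) : Across (i, j) (i, j + 1) (i, j + 1) (i + 1, j + 1)

/-- One can step from the cell `p` to the cell `q` without crossing an edge of `D`. -/
def CellStep (D : SimpleGraph (ℤ × ℤ)) (p q : ℤ × ℤ) : Prop :=
  ∃ a b, Across p q a b ∧ ¬ D.Adj a b

/-- The cells `p` and `q` lie in the same face of `D`. -/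
def SameFace (D : SimpleGraph (ℤ × ℤ)) : ℤ × ℤ → ℤ × ℤ → Prop :=
  Relation.EqvGen (CellStep D)

theorem LatticeAdj.symm {u v : ℤ × ℤ} (h : LatticeAdj u v) : LatticeAdj v u := by
  unfold LatticeAdj at *; omega

theorem LatticeAdj.exists_across {u v : ℤ × ℤ} (h : LatticeAdj u v) :
    ∃ p q, Across p q u v ∨ Across p q v u := by
  obtain ⟨a, b⟩ := u
  obtain ⟨c, d⟩ := v
  simp only [LatticeAdj] at h
  rcases h with ⟨rfl, rfl | rfl⟩ | ⟨rfl, rfl | rfl⟩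
  · exact ⟨_, _, Or.inl (by simpa using Across.right (a - 1) b)⟩
  · exact ⟨_, _, Or.inr (by simpa using Across.right (a - 1) d)⟩
  · exact ⟨_, _, Or.inl (by simpa using Across.up a (b - 1))⟩
  · exact ⟨_, _, Or.inr (by simpa using Across.up c (b - 1))⟩

theorem Across.corner {p q a b : ℤ × ℤ} (h : Across p q a b) :
    Corner p a ∧ Corner p b ∧ Corner q a ∧ Corner q b := by
  cases h <;> simp [Corner]

theorem Across.latticeAdj {p q a b : ℤ × ℤ} (h : Across p q a b) : LatticeAdj a b := by
  cases h <;> simp [LatticeAdj]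

theorem across_iff {p q a b : ℤ × ℤ} : Across p q a b ↔
    (q.1 = p.1 + 1 ∧ q.2 = p.2 ∧ a.1 = p.1 + 1 ∧ a.2 = p.2 ∧ b.1 = p.1 + 1 ∧ b.2 = p.2 + 1) ∨
    (q.1 = p.1 ∧ q.2 = p.2 + 1 ∧ a.1 = p.1 ∧ a.2 = p.2 + 1 ∧ b.1 = p.1 + 1 ∧ b.2 = p.2 + 1) := by
  constructor
  · intro h
    cases h <;> simp
  · obtain ⟨i, j⟩ := p
    obtain ⟨i', j'⟩ := q
    obtain ⟨c, d⟩ := a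
    obtain ⟨c', d'⟩ := b
    dsimp only
    rintro (⟨rfl, rfl, rfl, rfl, rfl, rfl⟩ | ⟨rfl, rfl, rfl, rfl, rfl, rfl⟩)
    · exact Across.right _ _
    · exact Across.up _ _

theorem Across.unique {p q p' q' a b : ℤ × ℤ} (h : Across p q a b) (h' : Across p' q' a b) :
    p = p' ∧ q = q' := by
  rw [across_iff] at h h'
  simp only [Prod.ext_iff]
  omega

theorem Across.not_reverse {p q p' q' a b : ℤ × ℤ} (h : Across p q a b) :
    ¬ Across p' q' b a := by
  rw [across_iff] at h ⊢
  omega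

theorem SameFace.eq_of_step {α : Type*} {D : SimpleGraph (ℤ × ℤ)} {f : ℤ × ℤ → α}
    (hf : ∀ p q, CellStep D p q → f p = f q) {p q : ℤ × ℤ} (h : SameFace D p q) : f p = f q := by
  induction h with
  | rel _ _ h => exact hf _ _ h
  | refl => rfl
  | symm _ _ _ ih => exact ih.symm
  | trans _ _ _ _ _ ih₁ ih₂ => exact ih₁.trans ih₂

/-! ### Parity of a closed lattice walk around the cells -/

/-- Contribution of the lattice edge `uv` to the crossing number of a leftward ray from `p`. -/
def crossing (u v p : ℤ × ℤ) : ZMod 2 :=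
  if u.1 = v.1 ∧ min u.2 v.2 = p.2 ∧ u.1 ≤ p.1 then 1 else 0

/-- Indicator of the horizontal ray ending at `(i, j)`. -/
def rayIndicator (i j : ℤ) (v : ℤ × ℤ) : ZMod 2 := if v.1 ≤ i ∧ v.2 = j then 1 else 0

theorem crossing_right {u v : ℤ × ℤ} (h : LatticeAdj u v) (i j : ℤ) :
    crossing u v (i, j) + crossing u v (i + 1, j) =
      if s(u, v) = s((i + 1, j), (i + 1, j + 1)) then 1 else 0 := by
  obtain ⟨a, b⟩ := u
  obtain ⟨c, d⟩ := v
  simp only [LatticeAdj, crossing, Sym2.eq_iff, Prod.mk.injEq] at *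
  split_ifs <;> first | omega | decide

theorem crossing_up {u v : ℤ × ℤ} (h : LatticeAdj u v) (i j : ℤ) :
    crossing u v (i, j) + crossing u v (i, j + 1) =
      rayIndicator i (j + 1) u + rayIndicator i (j + 1) v +
      if s(u, v) = s((i, j + 1), (i + 1, j + 1)) then 1 else 0 := by
  obtain ⟨a, b⟩ := u
  obtain ⟨c, d⟩ := v
  simp only [LatticeAdj, crossing, rayIndicator, Sym2.eq_iff, Prod.mk.injEq] at *
  split_ifs <;> first | omega | decide

theorem exists_walk_parity {Γ : SimpleGraph (ℤ × ℤ)} (hΓ : ∀ u v, Γ.Adj u v → LatticeAdj u v)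
    {u v : ℤ × ℤ} (w : Γ.Walk u v) :
    ∃ P : ℤ × ℤ → ZMod 2,
      (∀ i j, ¬ Γ.Adj (i + 1, j) (i + 1, j + 1) → P (i, j) + P (i + 1, j) = 0) ∧
      (∀ i j, ¬ Γ.Adj (i, j + 1) (i + 1, j + 1) →
        P (i, j) + P (i, j + 1) = rayIndicator i (j + 1) u + rayIndicator i (j + 1) v) := by
  have h2 : ∀ x : ZMod 2, x + x = 0 := by decide
  induction w with
  | nil => exact ⟨0, by simp, by simp [h2]⟩
  | @cons a b c hab w ih =>
    obtain ⟨P, hr, hu⟩ := ih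
    refine ⟨fun p => P p + crossing a b p, fun i j hij => ?_, fun i j hij => ?_⟩
    · have h1 := crossing_right (hΓ _ _ hab) i j
      rw [if_neg] at h1
      · linear_combination hr i j hij + h1
      · intro h; exact hij (by rw [← mem_edgeSet, ← h]; exact hab)
    · have h1 := crossing_up (hΓ _ _ hab) i j
      rw [if_neg] at h1
      · linear_combination hu i j hij + h1 + h2 (rayIndicator i (j + 1) b)
      · intro h; exact hij (by rw [← mem_edgeSet, ← h]; exact hab)

/-- A closed lattice walk traversing the edge `uv` exactly once splits the cells in two sides;
only the edges of the walk separate the sides, and `uv` does. -/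
theorem exists_sides {Γ : SimpleGraph (ℤ × ℤ)} (hΓ : ∀ u v, Γ.Adj u v → LatticeAdj u v)
    {u v : ℤ × ℤ} (huv : LatticeAdj u v) (hr : Γ.Reachable u v) :
    ∃ P : ℤ × ℤ → ZMod 2, ∀ p q a b, Across p q a b → ¬ Γ.Adj a b →
      (P p ≠ P q ↔ s(u, v) = s(a, b)) := by
  obtain ⟨w⟩ := hr
  obtain ⟨P, hP, hP'⟩ := exists_walk_parity hΓ w
  have h2 : ∀ x y : ZMod 2, x ≠ y ↔ x + y = 1 := by decide
  have h3 : ∀ x : ZMod 2, x + x = 0 := by decide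
  refine ⟨fun p => P p + crossing u v p, fun p q a b hpq hab => ?_⟩
  rw [h2]
  cases hpq with
  | right i j =>
    have e : P (i, j) + crossing u v (i, j) + (P (i + 1, j) + crossing u v (i + 1, j)) =
        if s(u, v) = s((i + 1, j), (i + 1, j + 1)) then 1 else 0 := by
      linear_combination hP i j hab + crossing_right huv i j
    rw [e]; split_ifs <;> simp_all
  | up i j =>
    have e : P (i, j) + crossing u v (i, j) + (P (i, j + 1) + crossing u v (i, j + 1)) =
        if s(u, v) = s((i, j + 1), (i + 1, j + 1)) then 1 else 0 := by
      linear_combination hP' i j hab + crossing_up huv i j +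
        h3 (rayIndicator i (j + 1) u) + h3 (rayIndicator i (j + 1) v)
    rw [e]; split_ifs <;> simp_all

end GridMap

/-- A lattice drawing whose vertices are blobs of lattice points: the points of the finite set `W`
carry labels, and the points with a given label are connected by edges of `D` among them. -/
structure GridMap (X : Type*) where
  W : Set (ℤ × ℤ)
  D : SimpleGraph (ℤ × ℤ)
  lab : ℤ × ℤ → X
  finite : W.Finite
  lattice : ∀ u v, D.Adj u v → GridMap.LatticeAdj u v
  mem_left : ∀ u v, D.Adj u v → u ∈ W
  conn : ∀ u ∈ W, ∀ v ∈ W, lab u = lab v →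
    (D ⊓ SimpleGraph.fromRel fun a b => lab a = lab b).Reachable u v

namespace GridMap

variable {X : Type*} (M : GridMap X)

/-- The subgraph of the edges joining points with the same label. -/
def mono : SimpleGraph (ℤ × ℤ) := M.D ⊓ SimpleGraph.fromRel fun a b => M.lab a = M.lab b

theorem mono_adj {u v : ℤ × ℤ} : M.mono.Adj u v ↔ M.D.Adj u v ∧ M.lab u = M.lab v := by
  simp only [mono, inf_adj, fromRel_adj]
  exact ⟨fun h => ⟨h.1, h.2.2.elim id Eq.symm⟩, fun h => ⟨h.1, h.1.ne, Or.inl h.2⟩⟩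

theorem mem_right {u v : ℤ × ℤ} (h : M.D.Adj u v) : v ∈ M.W := M.mem_left _ _ h.symm

/-- The labels touched by the face containing the cell `p`. -/
def touched (p : ℤ × ℤ) : Set X :=
  {x | ∃ q, SameFace M.D p q ∧ ∃ w ∈ M.W, Corner q w ∧ M.lab w = x}

/-- `M` has a cyclic colouring with `n` colours. -/
def Colourable (n : ℕ) : Prop := ∃ c : X → Fin n, ∀ p, Set.InjOn c (M.touched p)

theorem finite_edgeSet : M.D.edgeSet.Finite := by
  refine ((M.finite.prod M.finite).image fun p => s(p.1, p.2)).subset fun e he => ?_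
  induction e with
  | _ u v => exact ⟨(u, v), ⟨M.mem_left _ _ he, M.mem_right he⟩, rfl⟩

theorem finite_touched (p : ℤ × ℤ) : (M.touched p).Finite :=
  (M.finite.image M.lab).subset fun _ ⟨_, _, w, hw, _, h⟩ => ⟨w, hw, h⟩

/-- `M` is irreducible if no edge of `D` closes a cycle through the labels of its ends. -/
def Irreducible : Prop :=
  ∀ u v, M.D.Adj u v → ¬ (M.D.deleteEdges {s(u, v)} ⊓ SimpleGraph.fromRel fun a b =>
    (M.lab a = M.lab u ∨ M.lab a = M.lab v) ∧ (M.lab b = M.lab u ∨ M.lab b = M.lab v)).Reachable u v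

/-- Side of a cycle: keep the points labelled `x` or `y` and those with `P` equal to `ε`,
and delete one edge of the cycle. -/
def side (u v : ℤ × ℤ) (P : ℤ × ℤ → ZMod 2) (ε : ZMod 2)
    (hmono : M.lab u = M.lab v → (M.mono.deleteEdges {s(u, v)}).Reachable u v)
    (hP : ∀ a b, M.mono.Adj a b → M.lab a ≠ M.lab u → M.lab a ≠ M.lab v → P a = P b) :
    GridMap X where
  W := {w ∈ M.W | M.lab w = M.lab u ∨ M.lab w = M.lab v ∨ P w = ε}
  D :=
    { Adj := fun a b => M.D.Adj a b ∧ s(a, b) ≠ s(u, v) ∧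
        (M.lab a = M.lab u ∨ M.lab a = M.lab v ∨ P a = ε) ∧
        (M.lab b = M.lab u ∨ M.lab b = M.lab v ∨ P b = ε)
      symm := ⟨fun a b h => ⟨h.1.symm, by rw [Sym2.eq_swap]; exact h.2.1, h.2.2.2, h.2.2.1⟩⟩
      loopless := ⟨fun a h => h.1.ne rfl⟩ }
  lab := M.lab
  finite := M.finite.subset fun _ h => h.1
  lattice := fun a b h => M.lattice a b h.1
  mem_left := fun a b h => ⟨M.mem_left a b h.1, h.2.2.1⟩
  conn := by
    intro a ha b hb hab
    obtain ⟨w⟩ : M.mono.Reachable a b := M.conn a ha.1 b hb.1 hab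
    replace ha := ha.2
    clear hb hab
    induction w with
    | nil => rfl
    | @cons a c b hac w ih =>
      have hac' := M.mono_adj.1 hac
      have hc : M.lab c = M.lab u ∨ M.lab c = M.lab v ∨ P c = ε := by
        rw [← hac'.2]
        by_cases h1 : M.lab a = M.lab u
        · exact Or.inl h1
        by_cases h2 : M.lab a = M.lab v
        · exact Or.inr (Or.inl h2)
        · rw [← hP a c hac h1 h2]; tauto
      refine Reachable.trans ?_ (ih hc)
      by_cases he : s(a, c) = s(u, v)
      · have huv : M.lab u = M.lab v := by
          rcases Sym2.eq_iff.1 he with ⟨rfl, rfl⟩ | ⟨rfl, rfl⟩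
          · exact hac'.2
          · exact hac'.2.symm
        have key : ∀ s t, (M.mono.deleteEdges {s(u, v)}).Walk s t → M.lab s = M.lab u →
            (SimpleGraph.Reachable (SimpleGraph.mk (fun a b => M.D.Adj a b ∧ s(a, b) ≠ s(u, v) ∧
              (M.lab a = M.lab u ∨ M.lab a = M.lab v ∨ P a = ε) ∧
              (M.lab b = M.lab u ∨ M.lab b = M.lab v ∨ P b = ε))
              ⟨fun a b h => ⟨h.1.symm, by rw [Sym2.eq_swap]; exact h.2.1, h.2.2.2, h.2.2.1⟩⟩
              ⟨fun a h => h.1.ne rfl⟩ ⊓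
              SimpleGraph.fromRel fun a b => M.lab a = M.lab b) s t) := by
          intro s t w hs
          induction w with
          | nil => rfl
          | @cons s r t hsr w ih =>
            rw [deleteEdges_adj, M.mono_adj] at hsr
            refine Reachable.trans (Adj.reachable ?_) (ih (hsr.1.2.symm.trans hs))
            rw [inf_adj, fromRel_adj]
            exact ⟨⟨hsr.1.1, hsr.2, Or.inl hs, Or.inl (hsr.1.2.symm.trans hs)⟩, hsr.1.1.ne,
              Or.inl hsr.1.2⟩
        obtain ⟨w⟩ := hmono huv
        rcases Sym2.eq_iff.1 he with ⟨rfl, rfl⟩ | ⟨rfl, rfl⟩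
        · exact key _ _ w rfl
        · exact (key _ _ w rfl).symm
      · refine Adj.reachable ?_
        rw [inf_adj, fromRel_adj]
        exact ⟨⟨hac'.1, he, ha, hc⟩, hac'.1.ne, Or.inl hac'.2⟩

theorem exists_perm_matching {n : ℕ} {a b a' b' : Fin n} (h : a = b ↔ a' = b') :
    ∃ π : Equiv.Perm (Fin n), π a = a' ∧ π b = b' := by
  by_cases hab : a = b
  · exact ⟨Equiv.swap a a', by simp, by rw [← hab, ← h.1 hab]; simp⟩
  · have hab' : a' ≠ b' := fun e => hab (h.2 e)
    refine ⟨(Equiv.swap a a').trans (Equiv.swap (Equiv.swap a a' b) b'), ?_, by simp⟩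
    have : a' ≠ Equiv.swap a a' b := by
      intro e
      have := congrArg (Equiv.swap a a') e
      simp at this
      exact hab this
    simp [Equiv.swap_apply_of_ne_of_ne this hab']

set_option maxHeartbeats 1000000 in
theorem colourable_of_irreducible {k n : ℕ}
    (hirr : ∀ M : GridMap X, M.Irreducible → (∀ p, (M.touched p).ncard ≤ k) → M.Colourable n)
    (M : GridMap X) (hM : ∀ p, (M.touched p).ncard ≤ k) : M.Colourable n := by
  induction hm : M.D.edgeSet.ncard using Nat.strong_induction_on generalizing M with
  | _ m ih =>
  by_cases hI : M.Irreducible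
  · exact hirr M hI hM
  unfold Irreducible at hI
  push Not at hI
  obtain ⟨u, v, huv, hreach⟩ := hI
  set Γ := (M.D.deleteEdges {s(u, v)} ⊓ SimpleGraph.fromRel fun a b =>
    (M.lab a = M.lab u ∨ M.lab a = M.lab v) ∧ (M.lab b = M.lab u ∨ M.lab b = M.lab v)) with hΓ
  have hΓadj : ∀ a b, Γ.Adj a b ↔ M.D.Adj a b ∧ s(a, b) ≠ s(u, v) ∧
      (M.lab a = M.lab u ∨ M.lab a = M.lab v) ∧ (M.lab b = M.lab u ∨ M.lab b = M.lab v) := by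
    intro a b
    rw [hΓ, inf_adj, deleteEdges_adj, fromRel_adj, Set.mem_singleton_iff]
    have := fun h : M.D.Adj a b => h.ne
    tauto
  obtain ⟨P, hP⟩ := exists_sides (fun a b h => M.lattice a b ((hΓadj a b).1 h).1)
    (M.lattice u v huv) hreach
  -- the two cells along the edge `uv`
  obtain ⟨p₀, p₁, hacr⟩ := (M.lattice u v huv).exists_across
  have hp01 : P p₀ ≠ P p₁ := by
    rcases hacr with h | h
    · exact (hP _ _ _ _ h fun h => ((hΓadj _ _).1 h).2.1 rfl).2 rfl
    · exact (hP _ _ _ _ h fun h => ((hΓadj _ _).1 h).2.1 Sym2.eq_swap).2 Sym2.eq_swap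
  have hedge : ∃ pε : ZMod 2 → ℤ × ℤ, ∀ ε, P (pε ε) = ε ∧ Corner (pε ε) u ∧ Corner (pε ε) v ∧
      ∀ p q a b, Across p q a b → s(u, v) = s(a, b) → (P p = ε → p = pε ε) ∧
        (P q = ε → q = pε ε) := by
    have hc : Corner p₀ u ∧ Corner p₀ v ∧ Corner p₁ u ∧ Corner p₁ v := by
      rcases hacr with h | h
      · exact h.corner
      · have := h.corner; tauto
    have huniq : ∀ p q a b, Across p q a b → s(u, v) = s(a, b) → p = p₀ ∧ q = p₁ := by
      intro p q a b h e
      rcases Sym2.eq_iff.1 e with ⟨rfl, rfl⟩ | ⟨rfl, rfl⟩ <;> rcases hacr with h' | h'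
      · exact h.unique h'
      · exact (h.not_reverse h').elim
      · exact (h.not_reverse h').elim
      · exact h.unique h'
    have h01 : ∀ ε : ZMod 2, P p₀ = ε ∨ P p₁ = ε := by
      revert hp01; generalize P p₀ = a; generalize P p₁ = b; revert a b; decide
    refine ⟨fun ε => if P p₀ = ε then p₀ else p₁, fun ε => ?_⟩
    dsimp only
    split_ifs with h
    · refine ⟨h, hc.1, hc.2.1, fun p q a b hpq e => ?_⟩
      obtain ⟨rfl, rfl⟩ := huniq p q a b hpq e
      exact ⟨fun _ => rfl, fun h' => (hp01 (h.trans h'.symm)).elim⟩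
    · refine ⟨(h01 ε).resolve_left h, hc.2.2.1, hc.2.2.2, fun p q a b hpq e => ?_⟩
      obtain ⟨rfl, rfl⟩ := huniq p q a b hpq e
      exact ⟨fun h' => (h h').elim, fun _ => rfl⟩
  obtain ⟨pε, hpε⟩ := hedge
  -- cells around a point with another label lie on one side
  have hcell : ∀ w q, M.lab w ≠ M.lab u → M.lab w ≠ M.lab v → Corner q w → P q = P w := by
    intro w q hu hv hq
    have hno : ∀ p q a b, Across p q a b → (w = a ∨ w = b) → P p = P q := by
      intro p q a b hpq hw
      by_contra hne
      have hΓ' : ¬ Γ.Adj a b := by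
        rw [hΓadj]
        rcases hw with rfl | rfl <;> tauto
      rcases Sym2.eq_iff.1 ((hP p q a b hpq hΓ').1 hne) with ⟨rfl, rfl⟩ | ⟨rfl, rfl⟩ <;>
        rcases hw with rfl | rfl <;> tauto
    obtain ⟨i, j⟩ := w
    obtain ⟨i', j'⟩ := q
    have h1 := hno _ _ _ _ (Across.right (i - 1) j) (Or.inl (by simp))
    have h2 := hno _ _ _ _ (Across.right (i - 1) (j - 1)) (Or.inr (by simp))
    have h3 := hno _ _ _ _ (Across.up i (j - 1)) (Or.inl (by simp))
    have h4 := hno _ _ _ _ (Across.up (i - 1) (j - 1)) (Or.inr (by simp))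
    simp only [sub_add_cancel] at h1 h2 h3 h4
    simp only [Corner] at hq
    rcases hq with ⟨h | h, h' | h'⟩
    · subst h h'; rfl
    · obtain rfl : i = i' := h
      obtain rfl : j' = j - 1 := by omega
      exact h3
    · obtain rfl : i' = i - 1 := by omega
      obtain rfl : j = j' := h'
      exact h1
    · obtain rfl : i' = i - 1 := by omega
      obtain rfl : j' = j - 1 := by omega
      exact h4.trans h1
  have hmono : M.lab u = M.lab v → (M.mono.deleteEdges {s(u, v)}).Reachable u v := by
    intro h
    refine hreach.mono fun a b hab => ?_
    rw [hΓadj] at hab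
    rw [deleteEdges_adj, M.mono_adj]
    refine ⟨⟨hab.1, ?_⟩, hab.2.1⟩
    rw [← h] at hab
    rw [hab.2.2.1.elim id id, hab.2.2.2.elim id id]
  have hPm : ∀ a b, M.mono.Adj a b → M.lab a ≠ M.lab u → M.lab a ≠ M.lab v → P a = P b := by
    intro a b hab hu hv
    rw [M.mono_adj] at hab
    obtain ⟨p, q, h⟩ := (M.lattice a b hab.1).exists_across
    have hc : Corner p a ∧ Corner p b := by rcases h with h | h <;> have := h.corner <;> tauto
    rw [← hcell a p hu hv hc.1, hcell b p (hab.2 ▸ hu) (hab.2 ▸ hv) hc.2]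
  let N : ZMod 2 → GridMap X := fun ε => M.side u v P ε hmono hPm
  have hDN : ∀ ε a b, (N ε).D.Adj a b ↔ M.D.Adj a b ∧ s(a, b) ≠ s(u, v) ∧
        (M.lab a = M.lab u ∨ M.lab a = M.lab v ∨ P a = ε) ∧
        (M.lab b = M.lab u ∨ M.lab b = M.lab v ∨ P b = ε) := fun _ _ _ => Iff.rfl
  have hWN : ∀ ε w, w ∈ (N ε).W ↔ w ∈ M.W ∧
      (M.lab w = M.lab u ∨ M.lab w = M.lab v ∨ P w = ε) := fun _ _ => Iff.rfl
  -- a face of a side touches no more labels than some face of `M`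
  have hstepN : ∀ ε p q, CellStep (N ε).D p q → ∀ t,
      (SameFace M.D t (if P p = ε then p else pε ε) ↔
        SameFace M.D t (if P q = ε then q else pε ε)) := by
    rintro ε p q ⟨a, b, hpq, hab⟩ t
    have hcross : P p ≠ P q → s(u, v) = s(a, b) := by
      intro hne
      refine (hP p q a b hpq fun h => hab ?_).1 hne
      rw [hΓadj] at h
      rw [hDN]
      tauto
    by_cases h1 : P p = ε <;> by_cases h2 : P q = ε
    · rw [if_pos h1, if_pos h2]
      have hstep : CellStep M.D p q := by
        refine ⟨a, b, hpq, fun hD => hab ((hDN _ _ _).2 ⟨hD, fun e => ?_, ?_, ?_⟩)⟩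
        · have := (hP p q a b hpq fun h => ((hΓadj _ _).1 h).2.1 e).2 e.symm
          exact this (h1.trans h2.symm)
        · by_cases hu : M.lab a = M.lab u
          · exact Or.inl hu
          by_cases hv : M.lab a = M.lab v
          · exact Or.inr (Or.inl hv)
          rw [← hcell a p hu hv hpq.corner.1]; tauto
        · by_cases hu : M.lab b = M.lab u
          · exact Or.inl hu
          by_cases hv : M.lab b = M.lab v
          · exact Or.inr (Or.inl hv)
          rw [← hcell b p hu hv hpq.corner.2.1]; tauto
      exact ⟨fun h => h.trans _ _ _ (.rel _ _ hstep),
        fun h => h.trans _ _ _ (.symm _ _ (.rel _ _ hstep))⟩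
    · rw [if_pos h1, if_neg h2]
      rw [((hpε ε).2.2.2 p q a b hpq (hcross (by rw [h1]; exact Ne.symm h2))).1 h1]
    · rw [if_neg h1, if_pos h2]
      rw [((hpε ε).2.2.2 p q a b hpq (hcross (by rw [h2]; exact h1))).2 h2]
    · rw [if_neg h1, if_neg h2]
  have htouchN : ∀ ε p, (N ε).touched p ⊆ M.touched (if P p = ε then p else pε ε) := by
    rintro ε p x ⟨q, hpq, w, hw, hqw, rfl⟩
    have hpq' : SameFace M.D (if P p = ε then p else pε ε) (if P q = ε then q else pε ε) := by
      have := SameFace.eq_of_step (f := fun q => SameFace M.D (if P p = ε then p else pε ε)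
        (if P q = ε then q else pε ε)) (fun p q h => propext (hstepN ε p q h _)) hpq
      exact this.mp (.refl _)
    rw [hWN] at hw
    by_cases hq : P q = ε
    · rw [if_pos hq] at hpq'
      exact ⟨q, hpq', w, hw.1, hqw, rfl⟩
    · rw [if_neg hq] at hpq'
      by_cases hu : M.lab w = M.lab u
      · exact ⟨_, hpq', u, M.mem_left _ _ huv, (hpε ε).2.1, hu.symm⟩
      by_cases hv : M.lab w = M.lab v
      · exact ⟨_, hpq', v, M.mem_right huv, (hpε ε).2.2.1, hv.symm⟩
      · exact (hq ((hcell w q hu hv hqw).trans ((hw.2.resolve_left hu).resolve_left hv))).elim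
  -- conversely, a face of `M` on one side lies in a face of that side
  have hstepM : ∀ p q, CellStep M.D p q → P p = P q := by
    rintro p q ⟨a, b, hpq, hab⟩
    by_contra hne
    have := (hP p q a b hpq fun h => hab ((hΓadj _ _).1 h).1).1 hne
    exact hab (by rw [← mem_edgeSet, ← this]; exact huv)
  have htouchM : ∀ p, M.touched p ⊆ (N (P p)).touched p := by
    rintro p x ⟨q, hpq, w, hw, hqw, rfl⟩
    have hside : P p = P q := SameFace.eq_of_step hstepM hpq
    refine ⟨q, ?_, w, ?_, hqw, rfl⟩
    · exact hpq.mono fun a b ⟨c, d, h, h'⟩ => ⟨c, d, h, fun h'' => h' h''.1⟩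
    · rw [hWN]
      refine ⟨hw, ?_⟩
      by_cases hu : M.lab w = M.lab u
      · exact Or.inl hu
      by_cases hv : M.lab w = M.lab v
      · exact Or.inr (Or.inl hv)
      rw [← hcell w q hu hv hqw]; exact Or.inr (Or.inr hside.symm)
  have hcol : ∀ ε, (N ε).Colourable n := by
    intro ε
    refine ih (N ε).D.edgeSet.ncard ?_ (N ε) (fun p => ?_) rfl
    · rw [← hm]
      refine Set.ncard_lt_ncard ⟨?_, fun h => ?_⟩ M.finite_edgeSet
      · exact edgeSet_mono fun a b h => h.1
      · exact ((hDN ε u v).1 (h (M.D.mem_edgeSet.2 huv))).2.1 rfl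
    · exact (Set.ncard_le_ncard (htouchN ε p) (M.finite_touched _)).trans (hM _)
  choose c hc using hcol
  have hcuv : ∀ ε, c ε (M.lab u) = c ε (M.lab v) ↔ M.lab u = M.lab v := by
    intro ε
    refine ⟨fun h => hc ε (pε ε) ?_ ?_ h, fun h => by rw [h]⟩
    · exact ⟨_, .refl _, u, (hWN _ _).2 ⟨M.mem_left _ _ huv, Or.inl rfl⟩, (hpε ε).2.1, rfl⟩
    · exact ⟨_, .refl _, v, (hWN _ _).2 ⟨M.mem_right huv, Or.inr (Or.inl rfl)⟩,
        (hpε ε).2.2.1, rfl⟩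
  obtain ⟨π, hπu, hπv⟩ := exists_perm_matching ((hcuv 1).trans (hcuv 0).symm)
  classical
  let T : Set X := {x | ∃ w ∈ M.W, M.lab w = x ∧ x ≠ M.lab u ∧ x ≠ M.lab v ∧ P w = 1}
  have hPlab : ∀ w ∈ M.W, ∀ w' ∈ M.W, M.lab w = M.lab w' → M.lab w ≠ M.lab u →
      M.lab w ≠ M.lab v → P w = P w' := by
    intro w hw w' hw' h hu hv
    obtain ⟨r⟩ : M.mono.Reachable w w' := M.conn w hw w' hw' h
    clear hw hw' h
    induction r with
    | nil => rfl
    | cons h r ih =>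
      have e := ((M.mono_adj).1 h).2
      exact (hPm _ _ h hu hv).trans (ih (e ▸ hu) (e ▸ hv))
  refine ⟨fun x => if x ∈ T then π (c 1 x) else c 0 x, fun p x hx y hy => ?_⟩
  have hval : ∀ x ∈ M.touched p, (if x ∈ T then π (c 1 x) else c 0 x) =
      if P p = 1 then π (c 1 x) else c 0 x := by
    rintro x ⟨q, hpq, w, hw, hqw, rfl⟩
    by_cases hu : M.lab w = M.lab u
    · rw [if_neg (fun h : M.lab w ∈ T => by obtain ⟨_, _, _, h, _⟩ := h; exact h hu), hu, hπu]
      split_ifs <;> rfl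
    by_cases hv : M.lab w = M.lab v
    · rw [if_neg (fun h : M.lab w ∈ T => by obtain ⟨_, _, _, _, h, _⟩ := h; exact h hv), hv, hπv]
      split_ifs <;> rfl
    have hPw : P w = P p := (hcell w q hu hv hqw).symm.trans (SameFace.eq_of_step hstepM hpq).symm
    have : M.lab w ∈ T ↔ P p = 1 := by
      constructor
      · rintro ⟨w', hw', e, _, _, h1⟩
        rw [← hPw, hPlab w hw w' hw' e.symm hu hv, h1]
      · intro h1
        exact ⟨w, hw, rfl, hu, hv, hPw.trans h1⟩
    simp only [this]
  intro hxy
  dsimp only at hxy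
  rw [hval x hx, hval y hy] at hxy
  have h01 : ∀ ε : ZMod 2, ε ≠ 1 → ε = 0 := by decide
  have hxM := htouchM p hx
  have hyM := htouchM p hy
  split_ifs at hxy with h1
  · rw [h1] at hxM hyM
    exact hc 1 p hxM hyM (π.injective hxy)
  · rw [h01 _ h1] at hxM hyM
    exact hc 0 p hxM hyM hxy

/-- The point of the plane with the given integer coordinates. -/
def pt (u : ℤ × ℤ) : ℝ × ℝ := ((u.1 : ℝ), (u.2 : ℝ))

/-- The lattice edge `ab`, as a set of points of the plane. -/
abbrev seg (a b : ℤ × ℤ) : Set (ℝ × ℝ) := segment ℝ (pt a) (pt b)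

theorem mem_segment_prod {x y z : ℝ × ℝ} : z ∈ segment ℝ x y ↔
    ∃ t : ℝ, 0 ≤ t ∧ t ≤ 1 ∧ z.1 = x.1 + t * (y.1 - x.1) ∧ z.2 = x.2 + t * (y.2 - x.2) := by
  rw [segment_eq_image']
  constructor
  · rintro ⟨t, ⟨h0, h1⟩, rfl⟩
    exact ⟨t, h0, h1, by simp, by simp⟩
  · rintro ⟨t, h0, h1, e1, e2⟩
    exact ⟨t, ⟨h0, h1⟩, by ext <;> simp [e1, e2]⟩

/-- Coordinates of the points of a degenerate or nondegenerate lattice edge. -/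
theorem mem_seg_coords {a b : ℤ × ℤ} (hab : a = b ∨ LatticeAdj a b) {z : ℝ × ℝ}
    (hz : z ∈ seg a b) :
    (z = pt a ∨ z = pt b) ∨
    (z.1 = a.1 ∧ a.1 = b.1 ∧ (((a.2 : ℝ) < z.2 ∧ z.2 < a.2 + 1 ∧ b.2 = a.2 + 1) ∨
      ((b.2 : ℝ) < z.2 ∧ z.2 < b.2 + 1 ∧ a.2 = b.2 + 1))) ∨
    (z.2 = a.2 ∧ a.2 = b.2 ∧ (((a.1 : ℝ) < z.1 ∧ z.1 < a.1 + 1 ∧ b.1 = a.1 + 1) ∨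
      ((b.1 : ℝ) < z.1 ∧ z.1 < b.1 + 1 ∧ a.1 = b.1 + 1))) := by
  obtain ⟨a₁, a₂⟩ := a
  obtain ⟨b₁, b₂⟩ := b
  obtain ⟨z₁, z₂⟩ := z
  obtain ⟨t, h0, h1, e1, e2⟩ := mem_segment_prod.1 hz
  simp only [pt, LatticeAdj, Prod.mk.injEq] at *
  rcases h0.eq_or_lt with rfl | h0
  · left; left; constructor <;> linarith
  rcases h1.eq_or_lt with rfl | h1
  · left; right; constructor <;> linarith
  rcases hab with ⟨rfl, rfl⟩ | ⟨rfl, rfl | rfl⟩ | ⟨rfl, rfl | rfl⟩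
  · left; left; constructor <;> linarith
  · right; left; push_cast at *
    exact ⟨by linarith, rfl, Or.inl ⟨by linarith, by linarith, rfl⟩⟩
  · right; left; push_cast at *
    exact ⟨by linarith, rfl, Or.inr ⟨by linarith, by linarith, rfl⟩⟩
  · right; right; push_cast at *
    exact ⟨by linarith, rfl, Or.inl ⟨by linarith, by linarith, rfl⟩⟩
  · right; right; push_cast at *
    exact ⟨by linarith, rfl, Or.inr ⟨by linarith, by linarith, rfl⟩⟩

theorem pt_injective : Function.Injective pt := fun u v h => by
  simpa [pt, Prod.ext_iff] using h

theorem eq_or_eq_of_pt_mem_seg {a b u : ℤ × ℤ} (hab : a = b ∨ LatticeAdj a b)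
    (h : pt u ∈ seg a b) : u = a ∨ u = b := by
  rcases mem_seg_coords hab h with (h | h) | ⟨_, _, ⟨h1, h2, _⟩ | ⟨h1, h2, _⟩⟩ |
    ⟨_, _, ⟨h1, h2, _⟩ | ⟨h1, h2, _⟩⟩
  · exact Or.inl (pt_injective h)
  · exact Or.inr (pt_injective h)
  all_goals
    simp only [pt] at h1 h2
    norm_cast at h1 h2
    omega

/-! ### Collapsing a unit segment -/

/-- A monotone map of the line collapsing `[0, 1]` and fixing the points outside `(0, 3/2)`. -/
noncomputable def squash (x : ℝ) : ℝ := min x (max 0 (3 * (x - 1)))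

/-- A map of the plane collapsing the segment from `(0, 0)` to `(1, 0)` to the origin. -/
noncomputable def collapse (z : ℝ × ℝ) : ℝ × ℝ :=
  (z.1 + (1 - min 1 (4 * |z.2|)) * (squash z.1 - z.1), z.2)

theorem squash_mono {x y : ℝ} (h : x ≤ y) : squash x ≤ squash y := by
  unfold squash; gcongr

theorem squash_le (x : ℝ) : squash x ≤ x := min_le_left _ _

theorem sub_le_squash (x : ℝ) : x - 1 ≤ squash x := by
  unfold squash
  rcases le_total 1 x with h | h
  · exact le_min (by linarith) ((by linarith : x - 1 ≤ 3 * (x - 1)).trans (le_max_right _ _))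
  · exact le_min (by linarith) (le_trans (by linarith) (le_max_left _ _))

theorem squash_eq_self {x : ℝ} (h : x ≤ 0 ∨ 3 / 2 ≤ x) : squash x = x := by
  unfold squash
  rcases h with h | h
  · exact min_eq_left (h.trans (le_max_left _ _))
  · exact min_eq_left (le_trans (by linarith) (le_max_right _ _))

theorem squash_injective_off {x y : ℝ} (hxy : x < y) (h : squash x = squash y) :
    0 ≤ x ∧ y ≤ 1 := by
  unfold squash at h
  rcases min_cases x (max 0 (3 * (x - 1))) with ⟨h1, h1'⟩ | ⟨h1, h1'⟩ <;>
  rcases min_cases y (max 0 (3 * (y - 1))) with ⟨h2, h2'⟩ | ⟨h2, h2'⟩ <;>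
  rcases max_cases 0 (3 * (x - 1)) with ⟨h3, h3'⟩ | ⟨h3, h3'⟩ <;>
  rcases max_cases 0 (3 * (y - 1)) with ⟨h4, h4'⟩ | ⟨h4, h4'⟩ <;>
  constructor <;> linarith

theorem squash_eq_zero {x : ℝ} (h0 : 0 ≤ x) (h1 : x ≤ 1) : squash x = 0 := by
  unfold squash
  rw [max_eq_left (by linarith), min_eq_right h0]

theorem continuous_collapse : Continuous collapse := by
  unfold collapse squash
  fun_prop

theorem dist_collapse_le (z : ℝ × ℝ) : dist (collapse z) z ≤ 1 := by
  rw [Prod.dist_eq, max_le_iff, Real.dist_eq, Real.dist_eq]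
  have h1 : 0 ≤ 1 - min 1 (4 * |z.2|) := by simp
  have h2 : 1 - min 1 (4 * |z.2|) ≤ 1 := by
    have : 0 ≤ min 1 (4 * |z.2|) := by positivity
    linarith
  have h3 := squash_le z.1
  have h4 := sub_le_squash z.1
  refine ⟨?_, by simp [collapse]⟩
  simp only [collapse, add_sub_cancel_left]
  rw [abs_mul, abs_of_nonneg h1]
  exact mul_le_one₀ h2 (abs_nonneg _) (by rw [abs_le]; constructor <;> linarith)

theorem collapse_eq_iff {z w : ℝ × ℝ} : collapse z = collapse w ↔ z = w ∨
    (z.2 = 0 ∧ w.2 = 0 ∧ z.1 ∈ Set.Icc 0 1 ∧ w.1 ∈ Set.Icc 0 1) := by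
  constructor
  · intro h
    have key : ∀ {x x' y : ℝ}, x < x' → collapse (x, y) = collapse (x', y) →
        y = 0 ∧ 0 ≤ x ∧ x' ≤ 1 := by
      intro x x' y hx h
      simp only [collapse, Prod.mk.injEq, and_true] at h
      have hs := squash_mono hx.le
      have hτ : 0 ≤ min 1 (4 * |y|) := by positivity
      have hτ1 : min 1 (4 * |y|) ≤ 1 := min_le_left _ _
      have h0 : min 1 (4 * |y|) = 0 := by nlinarith
      have hy : y = 0 := by
        rcases min_choice 1 (4 * |y|) with e | e
        · rw [h0] at e; norm_num at e
        · rw [h0] at e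
          exact abs_eq_zero.1 (by linarith)
      rw [h0] at h
      exact ⟨hy, squash_injective_off hx (by linarith)⟩
    have h2 : z.2 = w.2 := (Prod.ext_iff.1 h).2
    obtain ⟨x, y⟩ := z
    obtain ⟨x', y'⟩ := w
    obtain rfl : y = y' := h2
    rcases lt_trichotomy x x' with hx | rfl | hx
    · obtain ⟨rfl, h0, h1⟩ := key hx h
      exact Or.inr ⟨rfl, rfl, ⟨h0, hx.le.trans h1⟩, h0.trans hx.le, h1⟩
    · exact Or.inl rfl
    · obtain ⟨rfl, h0, h1⟩ := key hx h.symm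
      exact Or.inr ⟨rfl, rfl, ⟨h0.trans hx.le, h1⟩, h0, hx.le.trans h1⟩
  · rintro (rfl | ⟨h1, h2, h3, h4⟩)
    · rfl
    · simp [collapse, h1, h2, squash_eq_zero h3.1 h3.2, squash_eq_zero h4.1 h4.2]

theorem collapse_surjective : Function.Surjective collapse := by
  rintro ⟨x, y⟩
  have hc : Continuous fun s : ℝ => (collapse (s, y)).1 :=
    continuous_fst.comp (continuous_collapse.comp (by fun_prop))
  have hd : ∀ s : ℝ, |(collapse (s, y)).1 - s| ≤ 1 := fun s =>
    (le_max_left _ _).trans (dist_collapse_le (s, y))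
  obtain ⟨s, -, hs⟩ := intermediate_value_Icc (by linarith : x - 1 ≤ x + 1) hc.continuousOn
    (show x ∈ Set.Icc _ _ from
      ⟨by linarith [(abs_le.1 (hd (x - 1))).2], by linarith [(abs_le.1 (hd (x + 1))).1]⟩)
  exact ⟨(s, y), Prod.ext hs rfl⟩

theorem collapse_eq_self {z : ℝ × ℝ} (h : z.1 ≤ 0 ∨ 3 / 2 ≤ z.1 ∨ 1 / 4 ≤ |z.2|) :
    collapse z = z := by
  refine Prod.ext ?_ rfl
  rcases or_assoc.2 h with h | h
  · simp [collapse, squash_eq_self h]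
  · simp [collapse, min_eq_left (by linarith : 1 ≤ 4 * |z.2|)]

theorem collapse_isClosedMap : IsClosedMap collapse := by
  refine IsProperMap.isClosedMap (isProperMap_iff_isCompact_preimage.2
    ⟨continuous_collapse, fun K hK => ?_⟩)
  refine Metric.isCompact_of_isClosed_isBounded (hK.isClosed.preimage continuous_collapse) ?_
  obtain ⟨R, hR⟩ := hK.isBounded.subset_closedBall 0
  refine (Metric.isBounded_closedBall (x := (0 : ℝ × ℝ)) (r := R + 1)).subset fun z hz => ?_
  have h1 : dist (collapse z) 0 ≤ R := hR hz
  have h2 := dist_triangle_left z 0 (collapse z)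
  have h3 := dist_collapse_le z
  rw [Metric.mem_closedBall]
  linarith

/-- Rectangular coordinates with origin `p` and first unit vector `d`. -/
def frame (p d : ℤ × ℤ) (hd : d.1 ^ 2 + d.2 ^ 2 = 1) : (ℝ × ℝ) ≃ₜ (ℝ × ℝ) where
  toFun z := ((z.1 - p.1) * d.1 + (z.2 - p.2) * d.2, -(z.1 - p.1) * d.2 + (z.2 - p.2) * d.1)
  invFun z := (p.1 + z.1 * d.1 - z.2 * d.2, p.2 + z.1 * d.2 + z.2 * d.1)
  left_inv z := by
    have hd' : (d.1 : ℝ) ^ 2 + (d.2 : ℝ) ^ 2 = 1 := by exact_mod_cast hd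
    ext
    · linear_combination (z.1 - p.1) * hd'
    · linear_combination (z.2 - p.2) * hd'
  right_inv z := by
    have hd' : (d.1 : ℝ) ^ 2 + (d.2 : ℝ) ^ 2 = 1 := by exact_mod_cast hd
    ext
    · linear_combination z.1 * hd'
    · linear_combination z.2 * hd'
  continuous_toFun := by fun_prop
  continuous_invFun := by fun_prop

/-- Collapse of a lattice edge `pq` to `p` leaving all lattice edges not incident with `q` fixed. -/
theorem exists_collapse_edge {p q : ℤ × ℤ} (hpq : LatticeAdj p q) :
    ∃ ψ : ℝ × ℝ → ℝ × ℝ, Continuous ψ ∧ Function.Surjective ψ ∧ IsClosedMap ψ ∧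
      (∀ z w, ψ z = ψ w ↔ z = w ∨ (z ∈ seg p q ∧ w ∈ seg p q)) ∧
      ∀ a b, (a = b ∨ LatticeAdj a b) → a ≠ q → b ≠ q → ∀ z ∈ seg a b, ψ z = z := by
  obtain ⟨p₁, p₂⟩ := p
  obtain ⟨q₁, q₂⟩ := q
  obtain ⟨d₁, hd₁⟩ : ∃ d, q₁ = p₁ + d := ⟨q₁ - p₁, by ring⟩
  obtain ⟨d₂, hd₂⟩ : ∃ d, q₂ = p₂ + d := ⟨q₂ - p₂, by ring⟩
  subst hd₁ hd₂
  have hcases : (d₁ = 0 ∧ (d₂ = 1 ∨ d₂ = -1)) ∨ (d₂ = 0 ∧ (d₁ = 1 ∨ d₁ = -1)) := by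
    simp only [LatticeAdj] at hpq; omega
  have hd : d₁ ^ 2 + d₂ ^ 2 = 1 := by
    rcases hcases with ⟨rfl, rfl | rfl⟩ | ⟨rfl, rfl | rfl⟩ <;> norm_num
  set Φ := frame (p₁, p₂) (d₁, d₂) hd with hΦ
  refine ⟨fun z => Φ.symm (collapse (Φ z)), ?_, ?_, ?_, fun z w => ?_, fun a b hab ha hb z hz => ?_⟩
  · exact Φ.symm.continuous.comp (continuous_collapse.comp Φ.continuous)
  · exact Φ.symm.surjective.comp (collapse_surjective.comp Φ.surjective)
  · exact Φ.symm.isClosedMap.comp (collapse_isClosedMap.comp Φ.isClosedMap)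
  · have hseg : ∀ z, z ∈ seg (p₁, p₂) (p₁ + d₁, p₂ + d₂) ↔ (Φ z).2 = 0 ∧ (Φ z).1 ∈ Set.Icc 0 1 := by
      intro z
      have hd' : (d₁ : ℝ) ^ 2 + (d₂ : ℝ) ^ 2 = 1 := by exact_mod_cast hd
      simp only [seg, mem_segment_prod, pt]
      push_cast
      constructor
      · rintro ⟨t, h0, h1, e1, e2⟩
        have e3 : (Φ z).1 = t := by
          change (z.1 - p₁) * d₁ + (z.2 - p₂) * d₂ = t
          rw [e1, e2]; linear_combination t * hd'
        have e4 : (Φ z).2 = 0 := by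
          change -(z.1 - p₁) * d₂ + (z.2 - p₂) * d₁ = 0
          rw [e1, e2]; ring
        exact ⟨e4, e3 ▸ h0, e3 ▸ h1⟩
      · rintro ⟨h0, h1, h2⟩
        refine ⟨(Φ z).1, h1, h2, ?_, ?_⟩
        · have := congrArg Prod.fst (Φ.symm_apply_apply z)
          change p₁ + (Φ z).1 * d₁ - (Φ z).2 * d₂ = z.1 at this
          rw [h0] at this
          linarith
        · have := congrArg Prod.snd (Φ.symm_apply_apply z)
          change p₂ + (Φ z).1 * d₂ + (Φ z).2 * d₁ = z.2 at this
          rw [h0] at this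
          linarith
    rw [Φ.symm.injective.eq_iff, collapse_eq_iff, Φ.injective.eq_iff, hseg, hseg]
    tauto
  · change Φ.symm (collapse (Φ z)) = z
    rw [Φ.symm_apply_eq]
    apply collapse_eq_self
    change (z.1 - p₁) * d₁ + (z.2 - p₂) * d₂ ≤ 0 ∨ 3 / 2 ≤ (z.1 - p₁) * d₁ + (z.2 - p₂) * d₂ ∨
      1 / 4 ≤ |-(z.1 - p₁) * d₂ + (z.2 - p₂) * d₁|
    obtain ⟨a₁, a₂⟩ := a
    obtain ⟨b₁, b₂⟩ := b
    obtain ⟨t, h0, h1, e1, e2⟩ := mem_segment_prod.1 hz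
    obtain ⟨x, hx⟩ : ∃ x, x = (a₁ - p₁) * d₁ + (a₂ - p₂) * d₂ := ⟨_, rfl⟩
    obtain ⟨y, hy⟩ : ∃ y, y = -(a₁ - p₁) * d₂ + (a₂ - p₂) * d₁ := ⟨_, rfl⟩
    obtain ⟨x', hx'⟩ : ∃ x, x = (b₁ - p₁) * d₁ + (b₂ - p₂) * d₂ := ⟨_, rfl⟩
    obtain ⟨y', hy'⟩ : ∃ y, y = -(b₁ - p₁) * d₂ + (b₂ - p₂) * d₁ := ⟨_, rfl⟩
    have hsep : (x ≤ 0 ∧ x' ≤ 0) ∨ (2 ≤ x ∧ 2 ≤ x') ∨ (1 ≤ y ∧ 1 ≤ y') ∨ (y ≤ -1 ∧ y' ≤ -1) := by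
      simp only [LatticeAdj, ne_eq, Prod.mk.injEq] at hab ha hb
      rcases hcases with ⟨rfl, rfl | rfl⟩ | ⟨rfl, rfl | rfl⟩ <;> omega
    have hX : (z.1 - p₁) * d₁ + (z.2 - p₂) * d₂ = (1 - t) * x + t * x' := by
      rw [hx, hx', e1, e2]; simp only [pt]; push_cast; ring
    have hY : -(z.1 - p₁) * d₂ + (z.2 - p₂) * d₁ = (1 - t) * y + t * y' := by
      rw [hy, hy', e1, e2]; simp only [pt]; push_cast; ring
    rw [hX, hY]
    rcases hsep with ⟨h, h'⟩ | ⟨h, h'⟩ | ⟨h, h'⟩ | ⟨h, h'⟩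
    · have h : (x : ℝ) ≤ 0 := by exact_mod_cast h
      have h' : (x' : ℝ) ≤ 0 := by exact_mod_cast h'
      left; nlinarith
    · have h : (2 : ℝ) ≤ x := by exact_mod_cast h
      have h' : (2 : ℝ) ≤ x' := by exact_mod_cast h'
      right; left; nlinarith
    · have h : (1 : ℝ) ≤ y := by exact_mod_cast h
      have h' : (1 : ℝ) ≤ y' := by exact_mod_cast h'
      right; right; exact le_trans (by nlinarith) (le_abs_self _)
    · have h : (y : ℝ) ≤ -1 := by exact_mod_cast h
      have h' : (y' : ℝ) ≤ -1 := by exact_mod_cast h'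
      right; right; exact le_trans (by nlinarith) (neg_le_abs _)

/-! ### Collapsing the components of a forest -/

theorem exists_leaf {V : Type*} {F : SimpleGraph V} (hF : F.IsAcyclic) (hfin : F.edgeSet.Finite)
    {a b : V} (hab : F.Adj a b) : ∃ p q, F.Adj p q ∧ ∀ r, F.Adj q r → r = p := by
  classical
  let S : Set ℕ := {n | ∃ (u v : V) (w : F.Walk u v), w.IsPath ∧ w.length = n}
  have hS : BddAbove S := by
    refine ⟨F.edgeSet.ncard, ?_⟩
    rintro n ⟨u, v, w, hw, rfl⟩
    rw [← Walk.length_edges, ← List.toFinset_card_of_nodup hw.isTrail.edges_nodup,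
      ← Set.ncard_coe_finset]
    exact Set.ncard_le_ncard (fun e he => w.edges_subset_edgeSet (by simpa using he)) hfin
  have h1 : 1 ∈ S := ⟨a, b, hab.toWalk, by simp [hab.ne], rfl⟩
  obtain ⟨u, v, w, hw, hlen⟩ := Nat.sSup_mem ⟨1, h1⟩ hS
  have hpos : 1 ≤ w.length := by rw [hlen]; exact le_csSup hS h1
  have hnil : ¬ w.Nil := by rw [← Walk.length_eq_zero_iff]; omega
  refine ⟨w.penultimate, v, w.adj_penultimate hnil, fun r hr => ?_⟩
  by_cases hmem : r ∈ w.support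
  · exact hF.eq_penultimate_of_adj_end hw hr hmem
  · have : (w.concat hr).length ≤ sSup S := le_csSup hS ⟨u, r, _, hw.concat hmem hr, rfl⟩
    rw [Walk.length_concat] at this
    omega

/-- The union of the edges of the component of `u` in `F`. -/
def blob (F : SimpleGraph (ℤ × ℤ)) (u : ℤ × ℤ) : Set (ℝ × ℝ) :=
  {z | ∃ a b, F.Reachable u a ∧ (a = b ∨ F.Adj a b) ∧ z ∈ seg a b}

/-- The components of a finite lattice forest can be collapsed to distinct points. -/
theorem exists_collapse_forest (F : SimpleGraph (ℤ × ℤ)) (hF : F.IsAcyclic)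
    (hlat : ∀ u v, F.Adj u v → LatticeAdj u v) (hfin : F.edgeSet.Finite) :
    ∃ f : ℝ × ℝ → ℝ × ℝ, Continuous f ∧ Function.Surjective f ∧ IsClosedMap f ∧
      ∀ z w, f z = f w ↔ z = w ∨ ∃ u, z ∈ blob F u ∧ w ∈ blob F u := by
  induction hn : F.edgeSet.ncard using Nat.strong_induction_on generalizing F with
  | _ n ih =>
  by_cases hedge : ∃ a b, F.Adj a b
  swap
  · push Not at hedge
    refine ⟨id, continuous_id, Function.surjective_id, IsClosedMap.id, fun z w => ?_⟩
    refine ⟨Or.inl, ?_⟩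
    rintro (h | ⟨u, ⟨a, b, hr, hab, hz⟩, a', b', hr', hab', hz'⟩)
    · exact h
    · have aux : ∀ {v}, F.Reachable u v → v = u := by
        rintro v ⟨_ | ⟨h, _⟩⟩
        · rfl
        · exact (hedge _ _ h).elim
      obtain rfl := hab.resolve_right (hedge _ _)
      obtain rfl := hab'.resolve_right (hedge _ _)
      rw [aux hr, seg, segment_same] at hz
      rw [aux hr', seg, segment_same] at hz'
      exact hz.trans hz'.symm
  obtain ⟨a₀, b₀, hab₀⟩ := hedge
  obtain ⟨p, q, hpq, hleaf⟩ := exists_leaf hF hfin hab₀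
  set F' := F.deleteEdges {s(p, q)} with hF'
  have hle : F' ≤ F := deleteEdges_le _
  have hF'q : ∀ r, ¬ F'.Adj q r := by
    intro r hr
    obtain rfl := hleaf r (hle hr)
    rw [hF', deleteEdges_adj] at hr
    exact hr.2 Sym2.eq_swap
  have hF'adj : ∀ a b, a ≠ q → b ≠ q → F.Adj a b → F'.Adj a b := by
    intro a b ha hb hab
    rw [hF', deleteEdges_adj]
    refine ⟨hab, fun e => ?_⟩
    rcases Sym2.eq_iff.1 e with ⟨_, h⟩ | ⟨h, _⟩
    · exact hb h
    · exact ha h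
  have hreachq : ∀ v, F'.Reachable q v → v = q := by
    rintro v ⟨_ | ⟨h, _⟩⟩
    · rfl
    · exact (hF'q _ h).elim
  have hreach : ∀ u v, u ≠ q → F.Reachable u v →
      (v ≠ q → F'.Reachable u v) ∧ (v = q → F'.Reachable u p) := by
    intro u v hu h
    rw [reachable_iff_reflTransGen] at h
    induction h with
    | refl => exact ⟨fun _ => .rfl, fun h => (hu h).elim⟩
    | @tail b c _ hbc ih =>
      refine ⟨fun hc => ?_, fun hc => ?_⟩
      · by_cases hb : b = q
        · subst hb
          rw [hleaf c hbc]
          exact ih.2 rfl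
        · exact (ih.1 hb).trans (hF'adj b c hb hc hbc).reachable
      · subst hc
        have := hleaf b hbc.symm
        subst this
        exact ih.1 hbc.ne
  obtain ⟨f, hfc, hfs, hfcl, hf⟩ := ih F'.edgeSet.ncard (by
    rw [← hn]
    refine Set.ncard_lt_ncard ⟨edgeSet_mono hle, fun h => ?_⟩ hfin
    exact hF'q p (F'.mem_edgeSet.1 (h (F.mem_edgeSet.2 hpq))).symm) F' (hF.anti hle)
    (fun u v h => hlat u v (hle h)) (hfin.subset (edgeSet_mono hle)) rfl
  obtain ⟨ψ, hψc, hψs, hψcl, hψ, hfix⟩ := exists_collapse_edge (hlat p q hpq)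
  refine ⟨f ∘ ψ, hfc.comp hψc, hfs.comp hψs, hfcl.comp hψcl, fun z w => ?_⟩
  have hψp : ψ (pt p) = pt p := hfix p p (Or.inl rfl) hpq.ne hpq.ne _ (left_mem_segment _ _ _)
  have hL : ∀ z ∈ seg p q, ψ z = pt p := fun z hz =>
    ((hψ z (pt p)).2 (Or.inr ⟨hz, left_mem_segment _ _ _⟩)).trans hψp
  rw [Function.comp_apply, Function.comp_apply, hf, hψ]
  constructor
  · have hback : ∀ u z, u ≠ q → ψ z ∈ blob F' u → z ∈ blob F u := by
      rintro u z hu ⟨a, b, hr, hab, hz⟩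
      have ha : a ≠ q := by rintro rfl; exact hu (hreachq u hr.symm)
      have hb : b ≠ q := by
        rintro rfl
        rcases hab with h | h
        · exact ha h
        · exact hF'q _ h.symm
      have hab' : a = b ∨ LatticeAdj a b := hab.imp_right fun h => hlat _ _ (hle h)
      have hz' : ψ (ψ z) = ψ z := hfix a b hab' ha hb _ hz
      rcases (hψ _ _).1 hz' with h | ⟨h, h'⟩
      · exact ⟨a, b, hr.mono hle, hab.imp_right fun h => hle h, h ▸ hz⟩
      · refine ⟨p, q, ?_, Or.inr hpq, h'⟩
        rw [hL z h'] at hz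
        rcases eq_or_eq_of_pt_mem_seg hab' hz with rfl | rfl
        · exact hr.mono hle
        · rcases hab with rfl | h
          · exact hr.mono hle
          · exact (hr.mono hle).trans (hle h).reachable
    rintro ((h | h) | ⟨u, hz, hw⟩)
    · exact Or.inl h
    · exact Or.inr ⟨p, ⟨p, q, .rfl, Or.inr hpq, h.1⟩, ⟨p, q, .rfl, Or.inr hpq, h.2⟩⟩
    · by_cases hu : u = q
      · subst hu
        have aux : ∀ z, z ∈ blob F' u → z = pt u := by
          rintro z ⟨a, b, hr, hab, hz⟩
          obtain rfl := hreachq a hr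
          obtain rfl := hab.resolve_right (hF'q _)
          rwa [seg, segment_same] at hz
        rcases (hψ z w).1 ((aux _ hz).trans (aux _ hw).symm) with h | h
        · exact Or.inl h
        · exact Or.inr ⟨p, ⟨p, u, .rfl, Or.inr hpq, h.1⟩, ⟨p, u, .rfl, Or.inr hpq, h.2⟩⟩
      · exact Or.inr ⟨u, hback u z hu hz, hback u w hu hw⟩
  · have hforw : ∀ u z, u ≠ q → z ∈ blob F u → ψ z ∈ blob F' u := by
      rintro u z hu ⟨a, b, hr, hab, hz⟩
      by_cases haq : a = q
      · subst haq
        have hzL : z ∈ seg p a := by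
          rcases hab with rfl | h
          · rw [seg, segment_same] at hz
            rw [hz]; exact right_mem_segment _ _ _
          · obtain rfl := hleaf b h
            rwa [seg, segment_symm] at hz
        rw [hL z hzL]
        exact ⟨p, p, (hreach u a hu hr).2 rfl, Or.inl rfl, left_mem_segment _ _ _⟩
      by_cases hbq : b = q
      · subst hbq
        obtain rfl := hleaf a (hab.resolve_left haq).symm
        rw [hL z hz]
        exact ⟨a, a, (hreach u a hu hr).1 haq, Or.inl rfl, left_mem_segment _ _ _⟩
      · rw [hfix a b (hab.imp_right fun h => hlat _ _ h) haq hbq z hz]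
        exact ⟨a, b, (hreach u a hu hr).1 haq, hab.imp_right (hF'adj a b haq hbq), hz⟩
    rintro (h | ⟨u, hz, hw⟩)
    · exact Or.inl (Or.inl h)
    · by_cases hu : u = q
      · subst hu
        have hmove : ∀ z ∈ blob F u, z ∈ blob F p := fun z ⟨a, b, hr, h⟩ =>
          ⟨a, b, hpq.reachable.trans hr, h⟩
        exact Or.inr ⟨p, hforw p z hpq.ne (hmove z hz), hforw p w hpq.ne (hmove w hw)⟩
      · exact Or.inr ⟨u, hforw u z hu hz, hforw u w hu hw⟩

theorem intCast_eq {m n : ℤ} {x : ℝ} (hm : (m : ℝ) < x) (hm' : x < m + 1) (hn : (n : ℝ) ≤ x)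
    (hn' : x ≤ n + 1) : n = m := by
  have h : n < m + 1 := by rify; linarith
  have h' : m < n + 1 := by rify; linarith
  omega

theorem intCast_ne {m n : ℤ} {x : ℝ} (hm : (m : ℝ) < x) (hm' : x < m + 1) : (n : ℝ) ≠ x := by
  rintro rfl
  norm_cast at hm hm'
  omega

/-! ### Unit cells -/

/-- The closed unit cell with lower left corner `p`. -/
def cell (p : ℤ × ℤ) : Set (ℝ × ℝ) := Set.Icc (p.1 : ℝ) (p.1 + 1) ×ˢ Set.Icc (p.2 : ℝ) (p.2 + 1)

/-- The open unit cell with lower left corner `p`. -/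
def openCell (p : ℤ × ℤ) : Set (ℝ × ℝ) :=
  Set.Ioo (p.1 : ℝ) (p.1 + 1) ×ˢ Set.Ioo (p.2 : ℝ) (p.2 + 1)

theorem mem_cell {p : ℤ × ℤ} {z : ℝ × ℝ} : z ∈ cell p ↔
    ((p.1 : ℝ) ≤ z.1 ∧ z.1 ≤ p.1 + 1) ∧ ((p.2 : ℝ) ≤ z.2 ∧ z.2 ≤ p.2 + 1) := Iff.rfl

theorem closure_openCell (p : ℤ × ℤ) : closure (openCell p) = cell p := by
  rw [openCell, closure_prod_eq, closure_Ioo (by simp), closure_Ioo (by simp), cell]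

theorem openCell_nonempty (p : ℤ × ℤ) : (openCell p).Nonempty :=
  (Set.nonempty_Ioo.2 (by simp)).prod (Set.nonempty_Ioo.2 (by simp))

theorem mem_cell_floor (z : ℝ × ℝ) : z ∈ cell (⌊z.1⌋, ⌊z.2⌋) :=
  mem_cell.2 ⟨⟨Int.floor_le _, (Int.lt_floor_add_one _).le⟩,
    ⟨Int.floor_le _, (Int.lt_floor_add_one _).le⟩⟩

theorem isClosed_cell (p : ℤ × ℤ) : IsClosed (cell p) := isClosed_Icc.prod isClosed_Icc

theorem isClosed_iUnion_cell (A : Set (ℤ × ℤ)) : IsClosed (⋃ p ∈ A, cell p) := by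
  rw [Set.biUnion_eq_iUnion]
  refine LocallyFinite.isClosed_iUnion (fun z => ?_) fun p => isClosed_cell p
  refine ⟨Metric.ball z 1, Metric.ball_mem_nhds z one_pos, ?_⟩
  refine Set.Finite.of_finite_image (f := Subtype.val) ?_ Subtype.val_injective.injOn
  refine (Set.finite_Icc ((⌊z.1⌋ - 3, ⌊z.2⌋ - 3) : ℤ × ℤ) (⌊z.1⌋ + 3, ⌊z.2⌋ + 3)).subset ?_
  rintro _ ⟨⟨p, hp⟩, ⟨w, hw, hwz⟩, rfl⟩
  rw [mem_cell] at hw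
  rw [Metric.mem_ball, Prod.dist_eq, max_lt_iff, Real.dist_eq, Real.dist_eq, abs_lt, abs_lt] at hwz
  have h1 := Int.floor_le z.1
  have h2 := Int.lt_floor_add_one z.1
  have h3 := Int.floor_le z.2
  have h4 := Int.lt_floor_add_one z.2
  obtain ⟨p₁, p₂⟩ := p
  dsimp only at *
  refine ⟨⟨?_, ?_⟩, ⟨?_, ?_⟩⟩ <;> dsimp only <;> rify <;> linarith [hw.1.1, hw.1.2, hw.2.1, hw.2.2,
    hwz.1.1, hwz.1.2, hwz.2.1, hwz.2.2]

theorem Corner.pt_mem_cell {p w : ℤ × ℤ} (h : Corner p w) : pt w ∈ cell p := by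
  rw [mem_cell]
  simp only [pt]
  norm_cast
  unfold Corner at h
  omega

/-- A cell meeting a lattice edge has an end of it as a corner. -/
theorem corner_or_corner {a b q : ℤ × ℤ} (hab : a = b ∨ LatticeAdj a b) {z : ℝ × ℝ}
    (hz : z ∈ seg a b) (hq : z ∈ cell q) : Corner q a ∨ Corner q b := by
  rw [mem_cell] at hq
  obtain ⟨⟨h1, h2⟩, h3, h4⟩ := hq
  rcases mem_seg_coords hab hz with (rfl | rfl) | ⟨e, e', ⟨g1, g2, g⟩ | ⟨g1, g2, g⟩⟩ |
    ⟨e, e', ⟨g1, g2, g⟩ | ⟨g1, g2, g⟩⟩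
  · left
    simp only [pt] at *
    norm_cast at *
    unfold Corner
    omega
  · right
    simp only [pt] at *
    norm_cast at *
    unfold Corner
    omega
  all_goals
    left
    unfold Corner
  · have := intCast_eq g1 g2 h3 h4; rw [e] at h1 h2; norm_cast at h1 h2; omega
  · have := intCast_eq g1 g2 h3 h4; rw [e] at h1 h2; norm_cast at h1 h2; omega
  · have := intCast_eq g1 g2 h1 h2; rw [e] at h3 h4; norm_cast at h3 h4; omega
  · have := intCast_eq g1 g2 h1 h2; rw [e] at h3 h4; norm_cast at h3 h4; omega

theorem Across.mem_seg {p q a b : ℤ × ℤ} (h : Across p q a b) {z : ℝ × ℝ} (hp : z ∈ cell p)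
    (hq : z ∈ cell q) : z ∈ seg a b := by
  rw [mem_cell] at hp hq
  cases h with
  | right i j =>
    push_cast at *
    exact mem_segment_prod.2 ⟨z.2 - j, by linarith, by linarith, by simp [pt]; linarith,
      by simp [pt]⟩
  | up i j =>
    push_cast at *
    exact mem_segment_prod.2 ⟨z.1 - i, by linarith, by linarith, by simp [pt],
      by simp [pt]; linarith⟩

/-- An interior point of a lattice edge lies on no other lattice edge. -/
theorem eq_of_mem_seg_of_interior {u v a b : ℤ × ℤ} (huv : LatticeAdj u v)
    (hab : a = b ∨ LatticeAdj a b) {t : ℝ} (ht : t ∈ Set.Ioo (0 : ℝ) 1)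
    (h : AffineMap.lineMap (pt u) (pt v) t ∈ seg a b) : s(a, b) = s(u, v) := by
  obtain ⟨u₁, u₂⟩ := u
  obtain ⟨v₁, v₂⟩ := v
  obtain ⟨a₁, a₂⟩ := a
  obtain ⟨b₁, b₂⟩ := b
  obtain ⟨t0, t1⟩ := ht
  have key := mem_seg_coords hab h
  have e1 : (AffineMap.lineMap (pt (u₁, u₂)) (pt (v₁, v₂)) t : ℝ × ℝ).1 = u₁ + t * (v₁ - u₁) := by
    simp [AffineMap.lineMap_apply, pt]; ring
  have e2 : (AffineMap.lineMap (pt (u₁, u₂)) (pt (v₁, v₂)) t : ℝ × ℝ).2 = u₂ + t * (v₂ - u₂) := by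
    simp [AffineMap.lineMap_apply, pt]; ring
  generalize (AffineMap.lineMap (pt (u₁, u₂)) (pt (v₁, v₂)) t : ℝ × ℝ) = z at *
  obtain ⟨z₁, z₂⟩ := z
  simp only [LatticeAdj, pt, Prod.mk.injEq, Sym2.eq_iff] at *
  rcases huv with ⟨rfl, rfl | rfl⟩ | ⟨rfl, rfl | rfl⟩ <;> push_cast at e1 e2
  · have g1 : (u₂ : ℝ) < z₂ := by linarith
    have g2 : z₂ < u₂ + 1 := by linarith
    have g : z₁ = u₁ := by linarith
    subst g
    rcases key with (⟨h, h'⟩ | ⟨h, h'⟩) | ⟨h, h', ⟨i, j, l⟩ | ⟨i, j, l⟩⟩ |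
      ⟨h, h', ⟨i, j, l⟩ | ⟨i, j, l⟩⟩
    · exact absurd h'.symm (intCast_ne g1 g2)
    · exact absurd h'.symm (intCast_ne g1 g2)
    · have := intCast_eq g1 g2 i.le j.le; norm_cast at h; omega
    · have := intCast_eq g1 g2 i.le j.le; norm_cast at h; omega
    · exact absurd h.symm (intCast_ne g1 g2)
    · exact absurd h.symm (intCast_ne g1 g2)
  · have g1 : (v₂ : ℝ) < z₂ := by linarith
    have g2 : z₂ < v₂ + 1 := by linarith
    have g : z₁ = u₁ := by linarith
    subst g
    rcases key with (⟨h, h'⟩ | ⟨h, h'⟩) | ⟨h, h', ⟨i, j, l⟩ | ⟨i, j, l⟩⟩ |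
      ⟨h, h', ⟨i, j, l⟩ | ⟨i, j, l⟩⟩
    · exact absurd h'.symm (intCast_ne g1 g2)
    · exact absurd h'.symm (intCast_ne g1 g2)
    · have := intCast_eq g1 g2 i.le j.le; norm_cast at h; omega
    · have := intCast_eq g1 g2 i.le j.le; norm_cast at h; omega
    · exact absurd h.symm (intCast_ne g1 g2)
    · exact absurd h.symm (intCast_ne g1 g2)
  · have g1 : (u₁ : ℝ) < z₁ := by linarith
    have g2 : z₁ < u₁ + 1 := by linarith
    have g : z₂ = u₂ := by linarith
    subst g
    rcases key with (⟨h, h'⟩ | ⟨h, h'⟩) | ⟨h, h', ⟨i, j, l⟩ | ⟨i, j, l⟩⟩ |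
      ⟨h, h', ⟨i, j, l⟩ | ⟨i, j, l⟩⟩
    · exact absurd h.symm (intCast_ne g1 g2)
    · exact absurd h.symm (intCast_ne g1 g2)
    · exact absurd h.symm (intCast_ne g1 g2)
    · exact absurd h.symm (intCast_ne g1 g2)
    · have := intCast_eq g1 g2 i.le j.le; norm_cast at h; omega
    · have := intCast_eq g1 g2 i.le j.le; norm_cast at h; omega
  · have g1 : (v₁ : ℝ) < z₁ := by linarith
    have g2 : z₁ < v₁ + 1 := by linarith
    have g : z₂ = u₂ := by linarith
    subst g
    rcases key with (⟨h, h'⟩ | ⟨h, h'⟩) | ⟨h, h', ⟨i, j, l⟩ | ⟨i, j, l⟩⟩ |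
      ⟨h, h', ⟨i, j, l⟩ | ⟨i, j, l⟩⟩
    · exact absurd h.symm (intCast_ne g1 g2)
    · exact absurd h.symm (intCast_ne g1 g2)
    · exact absurd h.symm (intCast_ne g1 g2)
    · exact absurd h.symm (intCast_ne g1 g2)
    · have := intCast_eq g1 g2 i.le j.le; norm_cast at h; omega
    · have := intCast_eq g1 g2 i.le j.le; norm_cast at h; omega

/-! ### The skeleton of a grid map -/

end GridMap

namespace GridMap

variable {X : Type*} (M : GridMap X)

/-- The points of the plane lying on the points of `W` or on the edges of `D`. -/
def skeleton : Set (ℝ × ℝ) := pt '' M.W ∪ {z | ∃ u v, M.D.Adj u v ∧ z ∈ seg u v}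

theorem sameFace_of_mem_cell {z : ℝ × ℝ} (hz : z ∉ M.skeleton) {p q : ℤ × ℤ} (hp : z ∈ cell p)
    (hq : z ∈ cell q) : SameFace M.D p q := by
  have step : ∀ {p q a b}, Across p q a b → z ∈ cell p → z ∈ cell q → SameFace M.D p q :=
    fun h hp hq => .rel _ _ ⟨_, _, h, fun hD => hz (Or.inr ⟨_, _, hD, h.mem_seg hp hq⟩)⟩
  have aux : ∀ {m n : ℤ} {x : ℝ}, ((m : ℝ) ≤ x ∧ x ≤ m + 1) → ((n : ℝ) ≤ x ∧ x ≤ n + 1) →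
      n = m ∨ n = m + 1 ∨ m = n + 1 := by
    rintro m n x ⟨hm, hm'⟩ ⟨hn, hn'⟩
    have i1 : n ≤ m + 1 := by rify; linarith
    have i2 : m ≤ n + 1 := by rify; linarith
    omega
  obtain ⟨i, j⟩ := p
  obtain ⟨i', j'⟩ := q
  have hr : z ∈ cell (i', j) := ⟨hq.1, hp.2⟩
  refine Relation.EqvGen.trans _ (i', j) _ ?_ ?_
  · rcases aux (mem_cell.1 hp).1 (mem_cell.1 hr).1 with h | h | h <;> dsimp only at h <;> subst h
    · exact .refl _
    · exact step (.right _ _) hp hr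
    · exact (step (.right _ _) hr hp).symm
  · rcases aux (mem_cell.1 hr).2 (mem_cell.1 hq).2 with h | h | h <;> dsimp only at h <;> subst h
    · exact .refl _
    · exact step (.up _ _) hr hq
    · exact (step (.up _ _) hq hr).symm

theorem not_mem_skeleton_of_mem_openCell {p : ℤ × ℤ} {z : ℝ × ℝ} (hz : z ∈ openCell p) :
    z ∉ M.skeleton := by
  obtain ⟨⟨h1, h2⟩, h3, h4⟩ := hz
  rintro (⟨w, -, rfl⟩ | ⟨u, v, huv, hz⟩)
  · exact intCast_ne h1 h2 rfl
  · rcases mem_seg_coords (Or.inr (M.lattice _ _ huv)) hz with (rfl | rfl) | h | h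
    · exact intCast_ne h1 h2 rfl
    · exact intCast_ne h1 h2 rfl
    · exact intCast_ne h1 h2 h.1.symm
    · exact intCast_ne h3 h4 h.1.symm

/-- Two cells in the same face can be joined by a chain of connected sets avoiding the skeleton. -/
theorem exists_preconnected_of_cellStep {p q : ℤ × ℤ} (h : CellStep M.D p q) :
    ∃ U : Set (ℝ × ℝ), IsPreconnected U ∧ openCell p ⊆ U ∧ openCell q ⊆ U ∧
      Disjoint U M.skeleton := by
  obtain ⟨a, b, hab, hD⟩ := h
  have aux2 : ∀ {m n : ℤ} {x : ℝ}, (m : ℝ) < x → x < m + 2 → x = n → n = m + 1 := by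
    rintro m n x hm hm' rfl
    norm_cast at hm hm'
    omega
  cases hab with
  | right i j =>
    refine ⟨Set.Ioo (i : ℝ) (i + 2) ×ˢ Set.Ioo (j : ℝ) (j + 1),
      ((convex_Ioo _ _).prod (convex_Ioo _ _)).isPreconnected,
      Set.prod_mono (Set.Ioo_subset_Ioo le_rfl (by simp)) subset_rfl,
      Set.prod_mono (Set.Ioo_subset_Ioo (by simp) (by push_cast; linarith)) subset_rfl, ?_⟩
    rw [Set.disjoint_left]
    rintro z ⟨⟨h1, h2⟩, h3, h4⟩ (⟨w, -, rfl⟩ | ⟨u, v, huv, hz⟩)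
    · exact intCast_ne h3 h4 rfl
    · rcases mem_seg_coords (Or.inr (M.lattice _ _ huv)) hz with (rfl | rfl) |
        ⟨e, e', ⟨g1, g2, g⟩ | ⟨g1, g2, g⟩⟩ | h
      · exact intCast_ne h3 h4 rfl
      · exact intCast_ne h3 h4 rfl
      · have := intCast_eq h3 h4 g1.le g2.le
        have := aux2 h1 h2 e
        refine hD ?_
        convert huv using 1 <;> ext <;> dsimp only <;> omega
      · have := intCast_eq h3 h4 g1.le g2.le
        have := aux2 h1 h2 e
        refine hD ?_
        convert huv.symm using 1 <;> ext <;> dsimp only <;> omega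
      · exact intCast_ne h3 h4 h.1.symm
  | up i j =>
    refine ⟨Set.Ioo (i : ℝ) (i + 1) ×ˢ Set.Ioo (j : ℝ) (j + 2),
      ((convex_Ioo _ _).prod (convex_Ioo _ _)).isPreconnected,
      Set.prod_mono subset_rfl (Set.Ioo_subset_Ioo le_rfl (by simp)),
      Set.prod_mono subset_rfl (Set.Ioo_subset_Ioo (by simp) (by push_cast; linarith)), ?_⟩
    rw [Set.disjoint_left]
    rintro z ⟨⟨h1, h2⟩, h3, h4⟩ (⟨w, -, rfl⟩ | ⟨u, v, huv, hz⟩)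
    · exact intCast_ne h1 h2 rfl
    · rcases mem_seg_coords (Or.inr (M.lattice _ _ huv)) hz with (rfl | rfl) | h |
        ⟨e, e', ⟨g1, g2, g⟩ | ⟨g1, g2, g⟩⟩
      · exact intCast_ne h1 h2 rfl
      · exact intCast_ne h1 h2 rfl
      · exact intCast_ne h1 h2 h.1.symm
      · have := intCast_eq h1 h2 g1.le g2.le
        have := aux2 h3 h4 e
        refine hD ?_
        convert huv using 1 <;> ext <;> dsimp only <;> omega
      · have := intCast_eq h1 h2 g1.le g2.le
        have := aux2 h3 h4 e
        refine hD ?_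
        convert huv.symm using 1 <;> ext <;> dsimp only <;> omega

end GridMap

namespace GridMap

variable {X : Type*} (M : GridMap X)

theorem mono_reachable {u v : ℤ × ℤ} (h : M.mono.Reachable u v) :
    M.lab u = M.lab v ∧ (u ∈ M.W → v ∈ M.W) := by
  obtain ⟨w⟩ := h
  induction w with
  | nil => exact ⟨rfl, id⟩
  | cons h _ ih =>
    rw [mono_adj] at h
    exact ⟨h.2.trans ih.1, fun _ => ih.2 (M.mem_right h.1)⟩

variable {M}

theorem Irreducible.isAcyclic (hM : M.Irreducible) : M.mono.IsAcyclic := by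
  rw [isAcyclic_iff_forall_adj_isBridge]
  intro u v huv
  rw [isBridge_iff]
  intro hr
  rw [mono_adj] at huv
  refine hM u v huv.1 ?_
  obtain ⟨w⟩ := hr
  have key : ∀ a b, M.lab a = M.lab v → (M.mono.deleteEdges {s(u, v)}).Walk a b →
      (M.D.deleteEdges {s(u, v)} ⊓ SimpleGraph.fromRel fun a b =>
        (M.lab a = M.lab u ∨ M.lab a = M.lab v) ∧
          (M.lab b = M.lab u ∨ M.lab b = M.lab v)).Reachable a b := by
    intro a b ha w
    induction w with
    | nil => rfl
    | @cons a c b hac w ih =>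
      rw [deleteEdges_adj, mono_adj] at hac
      refine Reachable.trans (Adj.reachable ?_) (ih (hac.1.2.symm.trans ha))
      rw [inf_adj, deleteEdges_adj, fromRel_adj]
      exact ⟨⟨hac.1.1, hac.2⟩, hac.1.1.ne, Or.inl ⟨Or.inr ha, Or.inr (hac.1.2.symm.trans ha)⟩⟩
  exact key u v huv.2 w

theorem Irreducible.unique_edge (hM : M.Irreducible) {u v u' v' : ℤ × ℤ} (h : M.D.Adj u v)
    (h' : M.D.Adj u' v') (hne : M.lab u ≠ M.lab v) (hu : M.lab u = M.lab u')
    (hv : M.lab v = M.lab v') : s(u, v) = s(u', v') := by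
  by_contra hcon
  refine hM u v h ?_
  have key : ∀ a b, M.lab a = M.lab u ∨ M.lab a = M.lab v → M.mono.Walk a b →
      (M.D.deleteEdges {s(u, v)} ⊓ SimpleGraph.fromRel fun a b =>
        (M.lab a = M.lab u ∨ M.lab a = M.lab v) ∧
          (M.lab b = M.lab u ∨ M.lab b = M.lab v)).Reachable a b := by
    intro a b ha w
    induction w with
    | nil => rfl
    | @cons a c b hac w ih =>
      rw [mono_adj] at hac
      have hc : M.lab c = M.lab u ∨ M.lab c = M.lab v := hac.2 ▸ ha
      refine Reachable.trans (Adj.reachable ?_) (ih hc)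
      rw [inf_adj, deleteEdges_adj, fromRel_adj]
      refine ⟨⟨hac.1, fun h => ?_⟩, hac.1.ne, Or.inl ⟨ha, hc⟩⟩
      rcases Sym2.eq_iff.1 (Set.mem_singleton_iff.1 h) with ⟨rfl, rfl⟩ | ⟨rfl, rfl⟩
      · exact hne hac.2
      · exact hne hac.2.symm
  obtain ⟨w₁⟩ := M.conn u (M.mem_left _ _ h) u' (M.mem_left _ _ h') hu
  obtain ⟨w₂⟩ := M.conn v' (M.mem_right h') v (M.mem_right h) hv.symm
  refine (key _ _ (Or.inl rfl) w₁).trans (Reachable.trans (Adj.reachable ?_)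
    (key _ _ (Or.inr hv.symm) w₂))
  rw [inf_adj, deleteEdges_adj, fromRel_adj]
  exact ⟨⟨h', fun h => hcon (Set.mem_singleton_iff.1 h).symm⟩, h'.ne,
    Or.inl ⟨Or.inl hu.symm, Or.inr hv.symm⟩⟩

theorem eq_or_mem_mono_of_mem_blob {F : SimpleGraph (ℤ × ℤ)} {u : ℤ × ℤ} {z w : ℝ × ℝ}
    (hz : z ∈ blob F u) (hw : w ∈ blob F u) : z = w ∨ ∃ a b, F.Adj a b ∧ z ∈ seg a b := by
  obtain ⟨a, b, ha, hab, hz⟩ := hz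
  obtain ⟨c, d, hc, hcd, hw⟩ := hw
  rcases hab with rfl | hab
  swap
  · exact Or.inr ⟨a, b, hab, hz⟩
  rw [seg, segment_same, Set.mem_singleton_iff] at hz
  subst hz
  by_cases h : ∃ b, F.Adj a b
  · obtain ⟨b, hb⟩ := h
    exact Or.inr ⟨a, b, hb, left_mem_segment _ _ _⟩
  push Not at h
  have hac : a = c := by
    obtain ⟨w⟩ := ha.symm.trans hc
    cases w with
    | nil => rfl
    | cons h' _ => exact absurd h' (h _)
  subst hac
  rcases hcd with rfl | hcd
  · rw [seg, segment_same, Set.mem_singleton_iff] at hw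
    exact Or.inl hw.symm
  · exact absurd hcd (h _)

theorem reachable_of_pt_mem_blob {F : SimpleGraph (ℤ × ℤ)}
    (hlat : ∀ u v, F.Adj u v → LatticeAdj u v) {u w : ℤ × ℤ} (h : pt w ∈ blob F u) :
    F.Reachable u w := by
  obtain ⟨a, b, ha, hab, hz⟩ := h
  rcases eq_or_eq_of_pt_mem_seg (hab.imp_right (hlat _ _)) hz with rfl | rfl
  · exact ha
  · rcases hab with rfl | hab
    · exact ha
    · exact ha.trans hab.reachable

/-- A grid map whose labels have been collapsed to points. -/
structure Collapsing (M : GridMap X) where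
  f : ℝ × ℝ → ℝ × ℝ
  cont : Continuous f
  surj : Function.Surjective f
  closed : IsClosedMap f
  eq_iff : ∀ z w, f z = f w ↔ z = w ∨ ∃ u, z ∈ blob M.mono u ∧ w ∈ blob M.mono u

theorem Irreducible.nonempty_collapsing (hM : M.Irreducible) : Nonempty M.Collapsing := by
  obtain ⟨f, h1, h2, h3, h4⟩ := exists_collapse_forest M.mono hM.isAcyclic
    (fun u v h => M.lattice u v (M.mono_adj.1 h).1)
    (M.finite_edgeSet.subset (edgeSet_mono inf_le_left))
  exact ⟨⟨f, h1, h2, h3, h4⟩⟩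

namespace Collapsing

variable (C : M.Collapsing)

theorem eq_or_mono {z w : ℝ × ℝ} (h : C.f z = C.f w) :
    z = w ∨ ∃ a b, M.D.Adj a b ∧ M.lab a = M.lab b ∧ z ∈ seg a b := by
  rcases (C.eq_iff z w).1 h with h | ⟨u, hz, hw⟩
  · exact Or.inl h
  · exact (eq_or_mem_mono_of_mem_blob hz hw).imp_right
      fun ⟨a, b, hab, hz⟩ => ⟨a, b, (M.mono_adj.1 hab).1, (M.mono_adj.1 hab).2, hz⟩

theorem eq_of_not_mem {z w : ℝ × ℝ} (h : C.f z = C.f w) (hz : z ∉ M.skeleton) : z = w :=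
  (C.eq_or_mono h).resolve_right fun ⟨a, b, hab, _, hz'⟩ => hz (Or.inr ⟨a, b, hab, hz'⟩)

theorem mem_skeleton {z w : ℝ × ℝ} (h : C.f z = C.f w) (hw : w ∈ M.skeleton) :
    z ∈ M.skeleton := by
  by_contra hz
  exact hz (C.eq_of_not_mem h hz ▸ hw)

theorem lab_eq {u v : ℤ × ℤ} (h : C.f (pt u) = C.f (pt v)) : M.lab u = M.lab v := by
  have hlat : ∀ u v, M.mono.Adj u v → LatticeAdj u v :=
    fun u v h => M.lattice u v (M.mono_adj.1 h).1
  rcases (C.eq_iff _ _).1 h with h | ⟨x, hu, hv⟩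
  · rw [pt_injective h]
  · exact (M.mono_reachable ((reachable_of_pt_mem_blob hlat hu).symm.trans
      (reachable_of_pt_mem_blob hlat hv))).1

theorem eq_of_lab_eq {u v : ℤ × ℤ} (hu : u ∈ M.W) (hv : v ∈ M.W) (h : M.lab u = M.lab v) :
    C.f (pt u) = C.f (pt v) :=
  (C.eq_iff _ _).2 (Or.inr ⟨u, ⟨u, u, .refl _, Or.inl rfl, left_mem_segment _ _ _⟩,
    ⟨v, v, M.conn u hu v hv h, Or.inl rfl, left_mem_segment _ _ _⟩⟩)

theorem eq_of_mono {u v : ℤ × ℤ} (h : M.D.Adj u v) (hl : M.lab u = M.lab v) {z : ℝ × ℝ}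
    (hz : z ∈ seg u v) : C.f z = C.f (pt u) :=
  (C.eq_iff _ _).2 (Or.inr ⟨u, ⟨u, v, .refl _, Or.inr (M.mono_adj.2 ⟨h, hl⟩), hz⟩,
    ⟨u, u, .refl _, Or.inl rfl, left_mem_segment _ _ _⟩⟩)

/-- The collapsing map is injective at the interior points of edges joining distinct labels. -/
theorem eq_of_interior {u v : ℤ × ℤ} (h : M.D.Adj u v) (hl : M.lab u ≠ M.lab v) {t : ℝ}
    (ht : t ∈ Set.Ioo (0 : ℝ) 1) {w : ℝ × ℝ}
    (hw : C.f (AffineMap.lineMap (pt u) (pt v) t) = C.f w) :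
    AffineMap.lineMap (pt u) (pt v) t = w := by
  refine (C.eq_or_mono hw).resolve_right fun ⟨a, b, hab, hlab, hz⟩ => hl ?_
  have := eq_of_mem_seg_of_interior (M.lattice _ _ h) (Or.inr (M.lattice _ _ hab)) ht hz
  rcases Sym2.eq_iff.1 this with ⟨rfl, rfl⟩ | ⟨rfl, rfl⟩
  · exact hlab
  · exact hlab.symm

theorem exists_corner {w q : ℤ × ℤ} (hw : w ∈ M.W) {z : ℝ × ℝ} (hz : z ∈ cell q)
    (h : C.f z = C.f (pt w)) : ∃ w' ∈ M.W, Corner q w' ∧ M.lab w' = M.lab w := by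
  have hlat : ∀ u v, M.mono.Adj u v → LatticeAdj u v :=
    fun u v h => M.lattice u v (M.mono_adj.1 h).1
  rcases (C.eq_iff _ _).1 h with rfl | ⟨u, ⟨a, b, ha, hab, hz'⟩, hu⟩
  · have := corner_or_corner (Or.inl rfl) (left_mem_segment ℝ (pt w) (pt w)) hz
    exact ⟨w, hw, by simpa using this, rfl⟩
  · have hwa := (reachable_of_pt_mem_blob hlat hu).symm.trans ha
    have hwb : M.mono.Reachable w b := by
      rcases hab with rfl | hab
      · exact hwa
      · exact hwa.trans hab.reachable
    rcases corner_or_corner (hab.imp_right (hlat _ _)) hz' hz with hc | hc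
    · exact ⟨a, (M.mono_reachable hwa).2 hw, hc, (M.mono_reachable hwa).1.symm⟩
    · exact ⟨b, (M.mono_reachable hwb).2 hw, hc, (M.mono_reachable hwb).1.symm⟩

/-- The image of a cell lies in the face of the image of any cell in the same face. -/
theorem image_openCell_subset {p q : ℤ × ℤ} (h : SameFace M.D p q) {z : ℝ × ℝ}
    (hz : z ∈ openCell p) :
    C.f '' openCell q ⊆ connectedComponentIn (C.f '' M.skeleton)ᶜ (C.f z) := by
  have avoid : ∀ U, Disjoint U M.skeleton → C.f '' U ⊆ (C.f '' M.skeleton)ᶜ := by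
    rintro U hU _ ⟨x, hx, rfl⟩ ⟨y, hy, hxy⟩
    exact Set.disjoint_left.1 hU hx (C.mem_skeleton hxy.symm hy)
  have hcell : ∀ p, ∀ x ∈ openCell p, ∀ y ∈ openCell p,
      connectedComponentIn (C.f '' M.skeleton)ᶜ (C.f x) =
      connectedComponentIn (C.f '' M.skeleton)ᶜ (C.f y) := by
    intro p x hx y hy
    refine connectedComponentIn_eq (IsPreconnected.subset_connectedComponentIn
      (IsPreconnected.image (s := openCell p) ?_ C.f C.cont.continuousOn) ⟨x, hx, rfl⟩
      (avoid _ (Set.disjoint_left.2 fun _ h => M.not_mem_skeleton_of_mem_openCell h)) ⟨y, hy, rfl⟩)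
    exact ((convex_Ioo _ _).prod (convex_Ioo _ _)).isPreconnected
  have key : ∀ x ∈ openCell p, ∀ y ∈ openCell q,
      connectedComponentIn (C.f '' M.skeleton)ᶜ (C.f x) =
      connectedComponentIn (C.f '' M.skeleton)ᶜ (C.f y) := by
    clear hz
    induction h with
    | rel p q h =>
      intro x hx y hy
      obtain ⟨U, hU, hp, hq, hd⟩ := M.exists_preconnected_of_cellStep h
      exact connectedComponentIn_eq (IsPreconnected.subset_connectedComponentIn
        (hU.image C.f C.cont.continuousOn) ⟨x, hp hx, rfl⟩ (avoid U hd) ⟨y, hq hy, rfl⟩)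
    | refl p => exact hcell p
    | symm p q _ ih => exact fun x hx y hy => (ih y hy x hx).symm
    | trans p q r _ _ ih₁ ih₂ =>
      intro x hx y hy
      obtain ⟨m, hm⟩ := openCell_nonempty q
      exact (ih₁ x hx m hm).trans (ih₂ m hm y hy)
  rintro _ ⟨y, hy, rfl⟩
  rw [key z hz y hy]
  exact mem_connectedComponentIn
    (avoid {y} (Set.disjoint_singleton_left.2 (M.not_mem_skeleton_of_mem_openCell hy))
      ⟨y, rfl, rfl⟩)

/-- The closure of a face of the collapsed drawing is covered by the cells of a face. -/
theorem exists_closure_face_subset {x : ℝ × ℝ} (hx : x ∉ C.f '' M.skeleton) :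
    ∃ p, closure (connectedComponentIn (C.f '' M.skeleton)ᶜ x) ⊆
      C.f '' ⋃ q ∈ {q | SameFace M.D p q}, cell q := by
  obtain ⟨y, rfl⟩ := C.surj x
  refine ⟨(⌊y.1⌋, ⌊y.2⌋), closure_minimal ?_ (C.closed _ (isClosed_iUnion_cell _))⟩
  set p : ℤ × ℤ := (⌊y.1⌋, ⌊y.2⌋)
  set A := {q | SameFace M.D p q}
  set F := connectedComponentIn (C.f '' M.skeleton)ᶜ (C.f y)
  have hFsub : F ⊆ (C.f '' M.skeleton)ᶜ := connectedComponentIn_subset _ _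
  have hF := isPreconnected_closed_iff.1
    (isPreconnected_connectedComponentIn (F := (C.f '' M.skeleton)ᶜ) (x := C.f y))
    _ _ (C.closed _ (isClosed_iUnion_cell A)) (C.closed _ (isClosed_iUnion_cell Aᶜ))
  have hcover : ∀ z, z ∈ C.f '' (⋃ q ∈ A, cell q) ∪ C.f '' (⋃ q ∈ Aᶜ, cell q) := by
    intro z
    obtain ⟨z, rfl⟩ := C.surj z
    by_cases h : ((⌊z.1⌋, ⌊z.2⌋) : ℤ × ℤ) ∈ A
    · exact Or.inl ⟨z, Set.mem_biUnion h (mem_cell_floor z), rfl⟩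
    · exact Or.inr ⟨z, Set.mem_biUnion (Set.mem_compl h) (mem_cell_floor z), rfl⟩
  intro z hz
  refine (hcover z).resolve_right fun hz' => ?_
  obtain ⟨_, hw, ⟨a, ha, rfl⟩, ⟨b, hb, hab⟩⟩ := hF (fun z _ => hcover z)
    ⟨C.f y, mem_connectedComponentIn hx,
      ⟨y, Set.mem_biUnion (Relation.EqvGen.refl p) (mem_cell_floor y), rfl⟩⟩ ⟨z, hz, hz'⟩
  have hnot : a ∉ M.skeleton := fun h => hFsub hw ⟨a, h, rfl⟩
  have := C.eq_of_not_mem hab.symm hnot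
  subst this
  simp only [Set.mem_iUnion] at ha hb
  obtain ⟨q, hq, haq⟩ := ha
  obtain ⟨r, hr, har⟩ := hb
  exact hr (Relation.EqvGen.trans _ _ _ hq (M.sameFace_of_mem_cell hnot haq har))

end Collapsing

end GridMap

namespace GridMap

variable {X : Type*} {M : GridMap X}

/-- An irreducible grid map is a drawing of a plane graph on its labels. -/
theorem Irreducible.exists_planeEmbedding (hM : M.Irreducible) (C : M.Collapsing) {n : ℕ}
    (rep : Fin n → ℤ × ℤ) (hrep : ∀ i, rep i ∈ M.W)
    (hinj : ∀ i j, M.lab (rep i) = M.lab (rep j) → i = j)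
    (hsurj : ∀ w ∈ M.W, ∃ i, M.lab (rep i) = M.lab w) :
    ∃ (H : SimpleGraph (Fin n)) (emb : PlaneEmbedding H),
      (∀ i, emb.pos i = C.f (pt (rep i))) ∧ emb.drawing = C.f '' M.skeleton := by
  let H : SimpleGraph (Fin n) := SimpleGraph.fromRel fun i j =>
    ∃ u v, M.D.Adj u v ∧ M.lab u = M.lab (rep i) ∧ M.lab v = M.lab (rep j)
  have hH : ∀ e : H.edgeSet, ∃ u v i j, M.D.Adj u v ∧ M.lab u = M.lab (rep i) ∧
      M.lab v = M.lab (rep j) ∧ (e : Sym2 (Fin n)) = s(i, j) ∧ i ≠ j := by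
    rintro ⟨e, he⟩
    induction e with
    | _ i j =>
      rw [mem_edgeSet, fromRel_adj] at he
      rcases he with ⟨hne, ⟨u, v, h, hu, hv⟩ | ⟨u, v, h, hu, hv⟩⟩
      · exact ⟨u, v, i, j, h, hu, hv, rfl, hne⟩
      · exact ⟨v, u, i, j, h.symm, hv, hu, rfl, hne⟩
  choose eu ev ei ej hadj hu hv he hij using hH
  have hne : ∀ e, M.lab (eu e) ≠ M.lab (ev e) := fun e h =>
    hij e (hinj _ _ (by rw [← hu, ← hv, h]))
  have hends : ∀ e, C.f (pt (eu e)) ≠ C.f (pt (ev e)) := fun e h => hne e (C.lab_eq h)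
  let γ : H.edgeSet → ℝ → ℝ × ℝ := fun e t => C.f (AffineMap.lineMap (pt (eu e)) (pt (ev e)) t)
  have hline : ∀ e, Function.Injective (AffineMap.lineMap (k := ℝ) (pt (eu e)) (pt (ev e))) :=
    fun e => AffineMap.lineMap_injective ℝ fun h => hends e (by rw [h])
  refine ⟨H, ⟨fun i => C.f (pt (rep i)), fun i j h => hinj i j (C.lab_eq h), γ, fun e => ?_,
    fun e => ?_, fun e => ?_, fun e t ht => ?_, fun e e' hee s hs t ht h => ?_⟩, fun _ => rfl, ?_⟩
  · exact (C.cont.comp AffineMap.lineMap_continuous).continuousOn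
  · have interior : ∀ s ∈ Set.Ioo (0 : ℝ) 1, ∀ t, γ e s = γ e t → s = t := fun s hs t h =>
      hline e (C.eq_of_interior (hadj e) (hne e) hs h)
    have hIcc : ∀ t ∈ Set.Icc (0 : ℝ) 1, t ∈ Set.Ioo (0 : ℝ) 1 ∨ t = 0 ∨ t = 1 := by
      rintro t ⟨h0, h1⟩
      rcases h0.eq_or_lt with rfl | h0
      · exact Or.inr (Or.inl rfl)
      rcases h1.eq_or_lt with rfl | h1
      · exact Or.inr (Or.inr rfl)
      · exact Or.inl ⟨h0, h1⟩
    intro s hs t ht h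
    rcases hIcc s hs with hs | hs
    · exact interior s hs t h
    rcases hIcc t ht with ht | ht
    · exact (interior t ht s h.symm).symm
    rcases hs with rfl | rfl <;> rcases ht with rfl | rfl
    · rfl
    · simp only [γ, AffineMap.lineMap_apply_zero, AffineMap.lineMap_apply_one] at h
      exact absurd h (hends e)
    · simp only [γ, AffineMap.lineMap_apply_zero, AffineMap.lineMap_apply_one] at h
      exact absurd h.symm (hends e)
    · rfl
  · refine ⟨ei e, ej e, he e, ?_, ?_⟩
    · simp only [γ, AffineMap.lineMap_apply_zero]
      exact C.eq_of_lab_eq (M.mem_left _ _ (hadj e)) (hrep _) (hu e)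
    · simp only [γ, AffineMap.lineMap_apply_one]
      exact C.eq_of_lab_eq (M.mem_right (hadj e)) (hrep _) (hv e)
  · rintro ⟨i, hi⟩
    have := C.eq_of_interior (hadj e) (hne e) ht hi.symm
    have := eq_of_mem_seg_of_interior (M.lattice _ _ (hadj e)) (a := rep i) (Or.inl rfl) ht
      (by rw [this]; exact left_mem_segment _ _ _)
    rcases Sym2.eq_iff.1 this with ⟨h, h'⟩ | ⟨h, h'⟩
    · exact (hadj e).ne (h.symm.trans h')
    · exact (hadj e).ne (h'.symm.trans h)
  · have h1 := C.eq_of_interior (hadj e) (hne e) hs h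
    have h2 := eq_of_mem_seg_of_interior (M.lattice _ _ (hadj e))
      (Or.inr (M.lattice _ _ (hadj e'))) hs (by
        rw [h1, seg, segment_eq_image_lineMap]
        exact ⟨t, Set.Ioo_subset_Icc_self ht, rfl⟩)
    refine hee (Subtype.ext ?_)
    rw [he, he, Sym2.eq_iff]
    rcases Sym2.eq_iff.1 h2 with ⟨g, g'⟩ | ⟨g, g'⟩
    · exact Or.inl ⟨hinj _ _ (by rw [← hu, ← hu, g]), hinj _ _ (by rw [← hv, ← hv, g'])⟩
    · exact Or.inr ⟨hinj _ _ (by rw [← hu, ← hv, g']), hinj _ _ (by rw [← hu, ← hv, g])⟩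
  · refine Set.Subset.antisymm ?_ ?_
    · rintro z (⟨i, rfl⟩ | hz)
      · exact ⟨_, Or.inl ⟨_, hrep i, rfl⟩, rfl⟩
      · obtain ⟨e, t, ht, rfl⟩ := Set.mem_iUnion.1 hz
        refine ⟨_, Or.inr ⟨eu e, ev e, hadj e, ?_⟩, rfl⟩
        rw [seg, segment_eq_image_lineMap]
        exact ⟨t, ht, rfl⟩
    · have hpt : ∀ w ∈ M.W, ∃ i, C.f (pt (rep i)) = C.f (pt w) := fun w hw => by
        obtain ⟨i, hi⟩ := hsurj w hw
        exact ⟨i, C.eq_of_lab_eq (hrep i) hw hi⟩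
      rintro _ ⟨z, ⟨w, hw, rfl⟩ | ⟨u, v, huv, hz⟩, rfl⟩
      · exact Or.inl (hpt w hw)
      · by_cases hl : M.lab u = M.lab v
        · rw [C.eq_of_mono huv hl hz]
          exact Or.inl (hpt u (M.mem_left _ _ huv))
        · obtain ⟨i, hi⟩ := hsurj u (M.mem_left _ _ huv)
          obtain ⟨j, hj⟩ := hsurj v (M.mem_right huv)
          have hHij : H.Adj i j := by
            rw [fromRel_adj]
            refine ⟨?_, Or.inl ⟨u, v, huv, hi.symm, hj.symm⟩⟩
            rintro rfl
            exact hl (hi.symm.trans hj)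
          let e : H.edgeSet := ⟨s(i, j), hHij⟩
          have huv' : s(u, v) = s(eu e, ev e) := by
            have hee : s(i, j) = s(ei e, ej e) := he e
            rcases Sym2.eq_iff.1 hee with ⟨g, g'⟩ | ⟨g, g'⟩
            · exact hM.unique_edge huv (hadj e) hl (by rw [← hi, hu, g]) (by rw [← hj, hv, g'])
            · rw [Sym2.eq_swap (a := eu e)]
              exact hM.unique_edge huv (hadj e).symm hl (by rw [← hi, hv, g])
                (by rw [← hj, hu, g'])
          have hz' : z ∈ seg (eu e) (ev e) := by
            rcases Sym2.eq_iff.1 huv' with ⟨g, g'⟩ | ⟨g, g'⟩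
            · rwa [← g, ← g']
            · rw [← g, ← g', seg, segment_symm]
              exact hz
          rw [seg, segment_eq_image_lineMap] at hz'
          obtain ⟨t, ht, rfl⟩ := hz'
          exact Or.inr (Set.mem_iUnion.2 ⟨e, t, ht, rfl⟩)

/-- Cyclic colourability of plane graphs implies that of irreducible grid maps. -/
theorem Irreducible.colourable {k m : ℕ} (hm : 0 < m)
    (hcyc : ∀ (n : ℕ) (H : SimpleGraph (Fin n)) (emb : PlaneEmbedding H),
      emb.MaxFaceSizeLE k → emb.HasCyclicColoring m)
    (hM : M.Irreducible) (hk : ∀ p, (M.touched p).ncard ≤ k) : M.Colourable m := by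
  classical
  obtain ⟨C⟩ := hM.nonempty_collapsing
  have hfin : (M.lab '' M.W).Finite := M.finite.image _
  have : Finite (M.lab '' M.W) := hfin
  let ι := Finite.equivFin (M.lab '' M.W)
  have hex : ∀ i, ∃ w ∈ M.W, M.lab w = ι.symm i := fun i => (ι.symm i).2
  choose rep hrep hlab using hex
  have hinj : ∀ i j, M.lab (rep i) = M.lab (rep j) → i = j := fun i j h =>
    ι.symm.injective (Subtype.ext (by rw [← hlab, ← hlab, h]))
  have hsurj : ∀ w ∈ M.W, ∃ i, M.lab (rep i) = M.lab w := fun w hw =>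
    ⟨ι ⟨M.lab w, w, hw, rfl⟩, by rw [hlab, Equiv.symm_apply_apply]⟩
  obtain ⟨H, emb, hpos, hdraw⟩ := hM.exists_planeEmbedding C rep hrep hinj hsurj
  obtain ⟨c, hc, hcc⟩ := hcyc _ H emb (by
    rintro F ⟨x, hx, rfl⟩
    rw [hdraw] at hx ⊢
    obtain ⟨p, hp⟩ := C.exists_closure_face_subset hx
    refine le_trans (Set.ncard_le_ncard_of_injOn (fun i => M.lab (rep i)) ?_ ?_
      (M.finite_touched p)) (hk p)
    · intro i hi
      obtain ⟨z, hz, hzi⟩ := hp hi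
      rw [hpos] at hzi
      simp only [Set.mem_iUnion] at hz
      obtain ⟨q, hq, hzq⟩ := hz
      obtain ⟨w, hw, hcor, hl⟩ := C.exists_corner (hrep i) hzq hzi
      exact ⟨q, hq, w, hw, hcor, hl⟩
    · exact fun i _ j _ h => hinj i j h)
  refine ⟨fun x => if h : ∃ i, M.lab (rep i) = x then ⟨c h.choose, hc _⟩ else ⟨0, hm⟩, ?_⟩
  intro p x hx y hy hxy
  obtain ⟨z, hz⟩ := openCell_nonempty p
  have hzF : emb.IsFace (connectedComponentIn (C.f '' M.skeleton)ᶜ (C.f z)) := by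
    refine ⟨C.f z, ?_, by rw [hdraw]⟩
    rw [hdraw]
    rintro ⟨y, hy, hyz⟩
    exact M.not_mem_skeleton_of_mem_openCell hz (C.mem_skeleton hyz.symm hy)
  have key : ∀ i, M.lab (rep i) ∈ M.touched p →
      emb.IncidentFace i (connectedComponentIn (C.f '' M.skeleton)ᶜ (C.f z)) := by
    rintro i ⟨q, hq, w, hw, hcor, hl⟩
    rw [PlaneEmbedding.IncidentFace, hpos, C.eq_of_lab_eq (hrep i) hw hl.symm]
    have h1 := closure_mono (C.image_openCell_subset hq hz)
    refine h1 (image_closure_subset_closure_image C.cont ⟨pt w, ?_, rfl⟩)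
    rw [closure_openCell]
    exact hcor.pt_mem_cell
  have hex : ∀ x ∈ M.touched p, ∃ i, M.lab (rep i) = x := by
    rintro _ ⟨q, hq, w, hw, hcor, rfl⟩
    exact hsurj w hw
  have hx' := hex x hx
  have hy' := hex y hy
  simp only [dif_pos hx', dif_pos hy', Fin.mk.injEq] at hxy
  by_contra hne
  refine hcc _ hzF hx'.choose hy'.choose (fun h => hne ?_) (key _ ?_) (key _ ?_) hxy
  · rw [← hx'.choose_spec, ← hy'.choose_spec, h]
  · rw [hx'.choose_spec]; exact hx
  · rw [hy'.choose_spec]; exact hy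

theorem colourable_of_cyclic {k m : ℕ} (hm : 0 < m)
    (hcyc : ∀ (n : ℕ) (H : SimpleGraph (Fin n)) (emb : PlaneEmbedding H),
      emb.MaxFaceSizeLE k → emb.HasCyclicColoring m)
    (M : GridMap X) (hM : ∀ p, (M.touched p).ncard ≤ k) : M.Colourable m :=
  colourable_of_irreducible (fun _ hirr hk => hirr.colourable hm hcyc hk) M hM

end GridMap

/-- Labels prescribed on a set meeting every component extend so that every vertex is connected
within its label to that set. -/
theorem SimpleGraph.exists_label_extension {V X : Type*} (Γ : SimpleGraph V) (P : V → Prop)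
    (l₀ : V → X) (h : ∀ v, ∃ u, P u ∧ Γ.Reachable v u) :
    ∃ l : V → X, (∀ v, P v → l v = l₀ v) ∧ ∀ v, ∃ u, P u ∧ l u = l v ∧
      (Γ ⊓ SimpleGraph.fromRel fun a b => l a = l b).Reachable v u := by
  classical
  have hd : ∀ v, ∃ n, ∃ u, P u ∧ ∃ w : Γ.Walk v u, w.length = n := fun v => by
    obtain ⟨u, hu, ⟨w⟩⟩ := h v
    exact ⟨_, u, hu, w, rfl⟩
  let d : V → ℕ := fun v => Nat.find (hd v)
  have hd0 : ∀ v, d v = 0 → P v := fun v hv => by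
    obtain ⟨u, hu, w, hw⟩ := Nat.find_spec (hd v)
    have := w.eq_of_length_eq_zero (hw.trans hv)
    exact this ▸ hu
  have hdP : ∀ v, P v → d v = 0 := fun v hv =>
    Nat.le_zero.1 (Nat.find_min' (hd v) ⟨v, hv, .nil, rfl⟩)
  have hstep : ∀ v, ∃ u, d v ≠ 0 → Γ.Adj v u ∧ d v = d u + 1 := fun v => by
    by_cases hv : d v = 0
    · exact ⟨v, fun h => absurd hv h⟩
    obtain ⟨u, hu, w, hw⟩ := Nat.find_spec (hd v)
    cases w with
    | nil => exact absurd (hdP v hu) hv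
    | @cons _ x _ hx w =>
      refine ⟨x, fun _ => ⟨hx, le_antisymm ?_ ?_⟩⟩
      · obtain ⟨u', hu', w', hw'⟩ := Nat.find_spec (hd x)
        exact Nat.find_min' (hd v) ⟨u', hu', .cons hx w', by rw [Walk.length_cons, hw']⟩
      · have : d x ≤ w.length := Nat.find_min' (hd x) ⟨u, hu, w, rfl⟩
        rw [Walk.length_cons] at hw
        have : w.length + 1 = d v := hw
        omega
  choose p hp using hstep
  let l : V → X := fun v => l₀ (p^[d v] v)
  have hl : ∀ v, d v ≠ 0 → l v = l (p v) := fun v hv => by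
    change l₀ (p^[d v] v) = l₀ (p^[d (p v)] (p v))
    rw [(hp v hv).2, Function.iterate_succ_apply]
  refine ⟨l, fun v hv => by simp [l, hdP v hv], fun v => ?_⟩
  induction hn : d v generalizing v with
  | zero => exact ⟨v, hd0 v hn, rfl, .refl v⟩
  | succ n ih =>
    have hv : d v ≠ 0 := by omega
    obtain ⟨u, hu, hlu, hr⟩ := ih (p v) (by have := (hp v hv).2; omega)
    refine ⟨u, hu, hlu.trans (hl v hv).symm, Reachable.trans (Adj.reachable ?_) hr⟩
    rw [inf_adj, fromRel_adj]
    exact ⟨(hp v hv).1, (hp v hv).1.ne, Or.inl (hl v hv)⟩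

namespace GridMap

/-- The lattice points of the closed square with lower left corner `o` and side `m`. -/
def InSquare (o : ℤ × ℤ) (m : ℤ) (w : ℤ × ℤ) : Prop :=
  (o.1 ≤ w.1 ∧ w.1 ≤ o.1 + m) ∧ (o.2 ≤ w.2 ∧ w.2 ≤ o.2 + m)

/-- The lattice points of the open square with lower left corner `o` and side `m`. -/
def InOpenSquare (o : ℤ × ℤ) (m : ℤ) (w : ℤ × ℤ) : Prop :=
  (o.1 < w.1 ∧ w.1 < o.1 + m) ∧ (o.2 < w.2 ∧ w.2 < o.2 + m)

/-- The lattice points of the boundary of the square with lower left corner `o` and side `m`. -/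
def OnRing (o : ℤ × ℤ) (m : ℤ) (w : ℤ × ℤ) : Prop := InSquare o m w ∧ ¬ InOpenSquare o m w

/-- The cells of the square with lower left corner `o` and side `m`. -/
def CellIn (o : ℤ × ℤ) (m : ℤ) (p : ℤ × ℤ) : Prop :=
  (o.1 ≤ p.1 ∧ p.1 < o.1 + m) ∧ (o.2 ≤ p.2 ∧ p.2 < o.2 + m)

theorem reachable_of_onRing {Γ : SimpleGraph (ℤ × ℤ)} {o : ℤ × ℤ} {m : ℤ}
    (hΓ : ∀ u v, LatticeAdj u v → OnRing o m u → OnRing o m v → Γ.Adj u v) {u v : ℤ × ℤ}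
    (hu : OnRing o m u) (hv : OnRing o m v) : Γ.Reachable u v := by
  suffices ∀ u, OnRing o m u → Γ.Reachable o u from (this u hu).symm.trans (this v hv)
  clear hu hv u v
  obtain ⟨a, b⟩ := o
  have hor : ∀ y, y = b ∨ y = b + m → b ≤ y → y ≤ b + m → ∀ n : ℕ, (n : ℤ) ≤ m →
      Γ.Reachable (a, y) (a + n, y) := by
    intro y hy hy1 hy2 n
    induction n with
    | zero => intro _; simp
    | succ n ih =>
      intro hn
      push_cast at hn
      refine (ih (by omega)).trans (Adj.reachable (hΓ _ _ ?_ ?_ ?_)) <;>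
        simp only [LatticeAdj, OnRing, InSquare, InOpenSquare, Nat.cast_add, Nat.cast_one,
          true_and] <;> omega
  have ver : ∀ x, x = a ∨ x = a + m → a ≤ x → x ≤ a + m → ∀ n : ℕ, (n : ℤ) ≤ m →
      Γ.Reachable (x, b) (x, b + n) := by
    intro x hx hx1 hx2 n
    induction n with
    | zero => intro _; simp
    | succ n ih =>
      intro hn
      push_cast at hn
      refine (ih (by omega)).trans (Adj.reachable (hΓ _ _ ?_ ?_ ?_)) <;>
        simp only [LatticeAdj, OnRing, InSquare, InOpenSquare, Nat.cast_add, Nat.cast_one,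
          true_and] <;> omega
  rintro ⟨x, y⟩ ⟨⟨⟨h1, h2⟩, h3, h4⟩, h5⟩
  simp only [InOpenSquare] at h1 h2 h3 h4 h5
  obtain ⟨i, rfl⟩ : ∃ i : ℕ, x = a + i := ⟨(x - a).toNat, by omega⟩
  obtain ⟨j, rfl⟩ : ∃ j : ℕ, y = b + j := ⟨(y - b).toNat, by omega⟩
  by_cases hj : (j : ℤ) = 0 ∨ (j : ℤ) = m
  · exact (ver a (Or.inl rfl) le_rfl (by omega) j (by omega)).trans
      (hor (b + j) (by omega) (by omega) (by omega) i (by omega))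
  · exact (hor b (Or.inl rfl) le_rfl (by omega) i (by omega)).trans
      (ver (a + i) (by omega) (by omega) (by omega) j (by omega))

/-- Disjoint connected sets of lattice points can be coloured so that those meeting the boundary
of one of the given squares get distinct colours. -/
theorem exists_colouring_of_squares {S T : Type*} [Finite S] [Finite T] {k n : ℕ} (hk : 4 ≤ k)
    (hn : 0 < n)
    (hcyc : ∀ (r : ℕ) (H : SimpleGraph (Fin r)) (emb : PlaneEmbedding H),
      emb.MaxFaceSizeLE k → emb.HasCyclicColoring n)
    (V : S → Set (ℤ × ℤ)) (hfin : ∀ s, (V s).Finite)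
    (hconn : ∀ s, ∀ Γ : SimpleGraph (ℤ × ℤ),
      (∀ u ∈ V s, ∀ v ∈ V s, LatticeAdj u v → Γ.Adj u v) →
      ∀ u ∈ V s, ∀ v ∈ V s, Γ.Reachable u v)
    (hdisj : ∀ s s' w, w ∈ V s → w ∈ V s' → s = s')
    (o : T → ℤ × ℤ) {m : ℤ} (hm : 1 ≤ m)
    (havoid : ∀ s t, ∀ w ∈ V s, ¬ InOpenSquare (o t) m w)
    (hsq : ∀ t t' w, InSquare (o t) m w → InSquare (o t') m w → t = t')
    (hne : ∀ t, ∃ s, ∃ w ∈ V s, OnRing (o t) m w)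
    (hcard : ∀ t, {s | ∃ w ∈ V s, OnRing (o t) m w}.ncard ≤ k) :
    ∃ c : S → Fin n, ∀ t, Set.InjOn c {s | ∃ w ∈ V s, OnRing (o t) m w} := by
  classical
  obtain ⟨R, hRV, hRo⟩ : ∃ R : ℤ, (∀ s, ∀ w ∈ V s, InOpenSquare (-R, -R) (2 * R) w) ∧
      ∀ t w, InSquare (o t) m w → InOpenSquare (-R, -R) (2 * R) w := by
    have hf : ((⋃ s, V s) ∪ ⋃ t, {o t, o t + (m, m)}).Finite :=
      (Set.finite_iUnion hfin).union (Set.finite_iUnion fun t => by simp)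
    obtain ⟨R, hR⟩ := (hf.image fun w : ℤ × ℤ => |w.1| + |w.2|).bddAbove
    have hR' : ∀ w ∈ (⋃ s, V s) ∪ ⋃ t, {o t, o t + (m, m)}, |w.1| + |w.2| ≤ R :=
      fun w hw => hR ⟨w, hw, rfl⟩
    refine ⟨R + 1, fun s w hw => ?_, fun t w hw => ?_⟩
    · have := hR' w (Or.inl (Set.mem_iUnion.2 ⟨s, hw⟩))
      simp only [InOpenSquare]
      grind
    · have h1 := hR' (o t) (Or.inr (Set.mem_iUnion.2 ⟨t, by simp⟩))
      have h2 := hR' (o t + (m, m)) (Or.inr (Set.mem_iUnion.2 ⟨t, by simp⟩))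
      simp only [InOpenSquare, InSquare, Prod.fst_add, Prod.snd_add] at *
      grind
  set box : ℤ × ℤ := (-R, -R)
  let l₀ : ℤ × ℤ → S ⊕ Option (ℤ × ℤ) := fun w =>
    if h : ∃ s, w ∈ V s then Sum.inl h.choose
    else if OnRing box (2 * R) w then Sum.inr none else Sum.inr (some w)
  have hl₀V : ∀ s, ∀ w ∈ V s, l₀ w = Sum.inl s := fun s w hw => by
    have h : ∃ s, w ∈ V s := ⟨s, hw⟩
    simp only [l₀, dif_pos h]
    rw [hdisj _ _ _ h.choose_spec hw]
  have hl₀cases : ∀ w, (∃ s, w ∈ V s ∧ l₀ w = Sum.inl s) ∨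
      (OnRing box (2 * R) w ∧ l₀ w = Sum.inr none) ∨ l₀ w = Sum.inr (some w) := fun w => by
    by_cases h : ∃ s, w ∈ V s
    · obtain ⟨s, hs⟩ := h
      exact Or.inl ⟨s, hs, hl₀V s w hs⟩
    · by_cases h' : OnRing box (2 * R) w
      · exact Or.inr (Or.inl ⟨h', by simp only [l₀, dif_neg h, if_pos h']⟩)
      · exact Or.inr (Or.inr (by simp only [l₀, dif_neg h, if_neg h']))
  let Γ : SimpleGraph (ℤ × ℤ) :=
    { Adj := fun u v => LatticeAdj u v ∧ ∃ t, OnRing (o t) m u ∧ OnRing (o t) m v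
      symm := ⟨fun _ _ h => ⟨h.1.symm, h.2.imp fun _ h => h.symm⟩⟩
      loopless := ⟨fun a h => by have := h.1; unfold LatticeAdj at this; omega⟩ }
  let P : ℤ × ℤ → Prop := fun w => (∃ s, w ∈ V s) ∨ ∀ t, ¬ OnRing (o t) m w
  obtain ⟨l, hlP, hl⟩ := Γ.exists_label_extension P l₀ fun w => by
    by_cases h : ∃ t, OnRing (o t) m w
    · obtain ⟨t, ht⟩ := h
      obtain ⟨s, u, hu, hut⟩ := hne t
      exact ⟨u, Or.inl ⟨s, hu⟩,
        reachable_of_onRing (Γ := Γ) (fun a b h ha hb => ⟨h, t, ha, hb⟩) ht hut⟩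
    · exact ⟨w, Or.inr fun t ht => h ⟨t, ht⟩, .refl _⟩
  have hΓring : ∀ t u v, Γ.Reachable u v → OnRing (o t) m u → OnRing (o t) m v := by
    rintro t u v ⟨w⟩
    induction w with
    | nil => exact id
    | cons h _ ih =>
      obtain ⟨-, t', h1, h2⟩ := h
      intro hu
      have := hsq t t' _ hu.1 h1.1
      subst this
      exact ih h2
  have hboxring : ∀ t w, OnRing box (2 * R) w → ¬ OnRing (o t) m w := fun t w h h' =>
    h.2 (hRo t w h'.1)
  let W : Set (ℤ × ℤ) := {w | InSquare box (2 * R) w ∧ ∀ t, ¬ InOpenSquare (o t) m w}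
  have hVW : ∀ s, ∀ w ∈ V s, w ∈ W := fun s w hw => by
    refine ⟨?_, fun t => havoid s t w hw⟩
    have := hRV s w hw
    simp only [InSquare, InOpenSquare] at *
    omega
  have hringW : ∀ t w, OnRing (o t) m w → w ∈ W := fun t w hw => by
    constructor
    · have := hRo t w hw.1
      simp only [InSquare, InOpenSquare] at *
      omega
    · intro t' ht'
      have := hsq t t' w hw.1 (by simp only [InSquare, InOpenSquare] at *; omega)
      subst this
      exact hw.2 ht'
  have hboxW : ∀ w, OnRing box (2 * R) w → w ∈ W := fun w hw =>
    ⟨hw.1, fun t ht => hw.2 (hRo t w (by simp only [InSquare, InOpenSquare] at *; omega))⟩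
  let D : SimpleGraph (ℤ × ℤ) :=
    { Adj := fun u v => LatticeAdj u v ∧ u ∈ W ∧ v ∈ W
      symm := ⟨fun _ _ h => ⟨h.1.symm, h.2.symm⟩⟩
      loopless := ⟨fun a h => by have := h.1; unfold LatticeAdj at this; omega⟩ }
  have hlV : ∀ s, ∀ w ∈ V s, l w = Sum.inl s := fun s w hw => by
    rw [hlP w (Or.inl ⟨s, hw⟩), hl₀V s w hw]
  have hlbox : ∀ w, OnRing box (2 * R) w → l w = Sum.inr none := fun w hw => by
    rw [hlP w (Or.inr fun t => hboxring t w hw)]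
    rcases hl₀cases w with ⟨s, hs, -⟩ | h | h
    · exact absurd (hRV s w hs) hw.2
    · exact h.2
    · have : ¬ ∃ s, w ∈ V s := fun ⟨s, hs⟩ => hw.2 (hRV s w hs)
      simp only [l₀, dif_neg this, if_pos hw]
  have hlring : ∀ t w, OnRing (o t) m w → ∃ s, (∃ w ∈ V s, OnRing (o t) m w) ∧ l w = Sum.inl s := by
    intro t w hw
    obtain ⟨u, hu, hlu, hr⟩ := hl w
    have hut := hΓring t w u (hr.mono inf_le_left) hw
    rcases hu with ⟨s, hs⟩ | hu
    · exact ⟨s, ⟨u, hs, hut⟩, by rw [← hlu, hlV s u hs]⟩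
    · exact absurd hut (hu t)
  have hmonoadj : ∀ u v, LatticeAdj u v → u ∈ W → v ∈ W → l u = l v →
      (D ⊓ SimpleGraph.fromRel fun a b => l a = l b).Adj u v := fun u v h hu hv hlab => by
    rw [inf_adj, fromRel_adj]
    exact ⟨⟨h, hu, hv⟩, fun he => by subst he; unfold LatticeAdj at h; omega, Or.inl hlab⟩
  let M : GridMap (S ⊕ Option (ℤ × ℤ)) :=
    { W := W
      D := D
      lab := l
      finite := (Set.finite_Icc ((-R, -R) : ℤ × ℤ) (R, R)).subset fun w hw => by
        have := hw.1
        simp only [InSquare, box] at this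
        exact ⟨⟨by simpa using this.1.1, by simpa using this.2.1⟩,
          ⟨by dsimp only; omega, by dsimp only; omega⟩⟩
      lattice := fun u v h => h.1
      mem_left := fun u v h => h.2.1
      conn := by
        have hle : (Γ ⊓ SimpleGraph.fromRel fun a b => l a = l b) ≤
            (D ⊓ SimpleGraph.fromRel fun a b => l a = l b) := by
          refine inf_le_inf_right _ fun a b h => ?_
          obtain ⟨h, t, ha, hb⟩ := h
          exact ⟨h, hringW t a ha, hringW t b hb⟩
        intro u hu v hv huv
        obtain ⟨u', hu', hlu', hr⟩ := hl u
        obtain ⟨v', hv', hlv', hr'⟩ := hl v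
        refine (hr.mono hle).trans (Reachable.trans ?_ (hr'.mono hle).symm)
        have he : l₀ u' = l₀ v' := by rw [← hlP _ hu', ← hlP _ hv', hlu', hlv', huv]
        rcases hl₀cases u' with ⟨s, hs, h⟩ | ⟨hb, h⟩ | h <;>
          rcases hl₀cases v' with ⟨s', hs', h'⟩ | ⟨hb', h'⟩ | h' <;>
          rw [h, h'] at he <;> try cases he
        · exact hconn s _ (fun a ha b hb hab => hmonoadj a b hab (hVW s a ha) (hVW s b hb)
            (by rw [hlV s a ha, hlV s b hb])) _ hs _ hs'
        · exact reachable_of_onRing (fun a b hab ha hb => hmonoadj a b hab (hboxW a ha) (hboxW b hb)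
            (by rw [hlbox a ha, hlbox b hb])) hb hb'
        · rfl }
  have htouch : ∀ p, (M.touched p).ncard ≤ k := by
    intro p
    by_cases hpt : ∃ t, CellIn (o t) m p
    · obtain ⟨t, ht⟩ := hpt
      refine le_trans ?_ (hcard t)
      have : M.touched p ⊆ Sum.inl '' {s | ∃ w ∈ V s, OnRing (o t) m w} := by
        rintro _ ⟨q, hq, w, hw, hcor, rfl⟩
        have hqt : CellIn (o t) m q := by
          refine (hq.eq_of_step (f := CellIn (o t) m) fun p q h => propext ?_).mp ht
          obtain ⟨a, b, hab, hD⟩ := h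
          by_contra hcon
          refine hD ⟨hab.latticeAdj, hringW t a ?_, hringW t b ?_⟩ <;>
          · rw [across_iff] at hab
            simp only [CellIn, OnRing, InSquare, InOpenSquare] at *
            omega
        obtain ⟨s, hs, h⟩ := hlring t w ⟨by
          simp only [CellIn, InSquare, Corner] at *
          omega, hw.2 t⟩
        exact ⟨s, hs, h.symm⟩
      refine (Set.ncard_le_ncard this (Set.toFinite _)).trans (Set.ncard_image_le (Set.toFinite _))
    by_cases hpb : CellIn box (2 * R) p
    · have hsingle : ∀ q, SameFace M.D p q → q = p := by
        intro q hq
        refine ((hq.eq_of_step (f := fun r => r = p) fun q r h => propext ?_).mp rfl)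
        obtain ⟨a, b, hab, hD⟩ := h
        have hW : ∀ w, Corner p w → w ∈ W := fun w hw => by
          constructor
          · simp only [CellIn, InSquare, Corner] at *
            omega
          · intro t ht
            refine hpt ⟨t, ?_⟩
            simp only [CellIn, InOpenSquare, Corner] at *
            omega
        constructor
        · rintro rfl
          exact absurd ⟨hab.latticeAdj, hW a hab.corner.1, hW b hab.corner.2.1⟩ hD
        · rintro rfl
          exact absurd ⟨hab.latticeAdj, hW a hab.corner.2.2.1, hW b hab.corner.2.2.2⟩ hD
      have : M.touched p ⊆ l '' (({p, (p.1 + 1, p.2), (p.1, p.2 + 1), (p.1 + 1, p.2 + 1)} :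
          Finset (ℤ × ℤ)) : Set (ℤ × ℤ)) := by
        rintro _ ⟨q, hq, w, hw, hcor, rfl⟩
        rw [hsingle q hq] at hcor
        refine ⟨w, ?_, rfl⟩
        obtain ⟨x, y⟩ := w
        obtain ⟨i, j⟩ := p
        rcases hcor with ⟨h1 | h1, h2 | h2⟩ <;> dsimp only at h1 h2 <;> subst h1 <;> subst h2 <;>
          simp
      refine (Set.ncard_le_ncard this (Set.toFinite _)).trans
        ((Set.ncard_image_le (Set.toFinite _)).trans ?_)
      rw [Set.ncard_coe_finset]
      exact Finset.card_le_four.trans hk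
    · have : M.touched p ⊆ {Sum.inr none} := by
        rintro _ ⟨q, hq, w, hw, hcor, rfl⟩
        have hqb : ¬ CellIn box (2 * R) q := by
          refine (hq.eq_of_step (f := fun r => ¬ CellIn box (2 * R) r) fun p q h =>
            propext ?_).mp hpb
          obtain ⟨a, b, hab, hD⟩ := h
          by_contra hcon
          refine hD ⟨hab.latticeAdj, hboxW a ?_, hboxW b ?_⟩ <;>
          · rw [across_iff] at hab
            simp only [CellIn, OnRing, InSquare, InOpenSquare] at *
            omega
        have h1 := hw.1
        refine hlbox w ⟨hw.1, ?_⟩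
        simp only [CellIn, InSquare, InOpenSquare, Corner] at *
        omega
      refine (Set.ncard_le_ncard this (Set.finite_singleton _)).trans ?_
      rw [Set.ncard_singleton]
      omega
  obtain ⟨c, hc⟩ := colourable_of_cyclic hn hcyc M htouch
  refine ⟨fun s => c (Sum.inl s), fun t s hs s' hs' hcc => ?_⟩
  have hface : ∀ q, CellIn (o t) m q → SameFace M.D (o t) q := by
    have step : ∀ p q a b, Across p q a b → CellIn (o t) m p → CellIn (o t) m q →
        SameFace M.D p q := fun p q a b h hp hq => by
      refine .rel _ _ ⟨a, b, h, fun hD => ?_⟩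
      have ha := hD.2.1.2 t
      have hb := hD.2.2.2 t
      rw [across_iff] at h
      simp only [CellIn, InOpenSquare] at *
      omega
    have hor : ∀ i : ℕ, (i : ℤ) < m → SameFace M.D (o t) ((o t).1 + i, (o t).2) := by
      intro i
      induction i with
      | zero => intro _; rw [Nat.cast_zero, add_zero]; exact .refl _
      | succ i ih =>
        intro hi
        push_cast at hi
        refine .trans _ _ _ (ih (by omega)) (step _ _ _ _ (by
          rw [Nat.cast_succ, ← add_assoc]; exact .right _ _) ?_ ?_) <;>
        · simp only [CellIn]
          push_cast
          omega
    have ver : ∀ x, (o t).1 ≤ x → x < (o t).1 + m → ∀ j : ℕ, (j : ℤ) < m →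
        SameFace M.D (x, (o t).2) (x, (o t).2 + j) := by
      intro x hx hx' j
      induction j with
      | zero => intro _; rw [Nat.cast_zero, add_zero]; exact .refl _
      | succ j ih =>
        intro hj
        push_cast at hj
        refine .trans _ _ _ (ih (by omega)) (step _ _ _ _ (by
          rw [Nat.cast_succ, ← add_assoc]; exact .up _ _) ?_ ?_) <;>
        · simp only [CellIn]
          push_cast
          omega
    rintro ⟨x, y⟩ ⟨⟨h1, h2⟩, h3, h4⟩
    dsimp only at h1 h2 h3 h4
    obtain ⟨i, rfl⟩ : ∃ i : ℕ, x = (o t).1 + i := ⟨(x - (o t).1).toNat, by omega⟩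
    obtain ⟨j, rfl⟩ : ∃ j : ℕ, y = (o t).2 + j := ⟨(y - (o t).2).toNat, by omega⟩
    exact .trans _ _ _ (hor i (by omega)) (ver _ h1 h2 j (by omega))
  have htou : ∀ s, (∃ w ∈ V s, OnRing (o t) m w) → Sum.inl s ∈ M.touched (o t) := by
    rintro s ⟨w, hw, hwt⟩
    refine ⟨(min w.1 ((o t).1 + m - 1), min w.2 ((o t).2 + m - 1)), hface _ ?_, w, hVW s w hw, ?_,
      hlV s w hw⟩
    · simp only [CellIn, OnRing, InSquare] at *
      omega
    · simp only [Corner, OnRing, InSquare] at *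
      omega
  exact Sum.inl_injective (hc (o t) (htou s hs) (htou s' hs') hcc)

/-- The closed square with lower left corner `o` and side `m`. -/
def square (o : ℤ × ℤ) (m : ℤ) : Set (ℝ × ℝ) :=
  Set.Icc (o.1 : ℝ) (o.1 + m) ×ˢ Set.Icc (o.2 : ℝ) (o.2 + m)

/-- The open square with lower left corner `o` and side `m`. -/
def openSquare (o : ℤ × ℤ) (m : ℤ) : Set (ℝ × ℝ) :=
  Set.Ioo (o.1 : ℝ) (o.1 + m) ×ˢ Set.Ioo (o.2 : ℝ) (o.2 + m)

theorem mem_square {o : ℤ × ℤ} {m : ℤ} {z : ℝ × ℝ} : z ∈ square o m ↔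
    ((o.1 : ℝ) ≤ z.1 ∧ z.1 ≤ o.1 + m) ∧ ((o.2 : ℝ) ≤ z.2 ∧ z.2 ≤ o.2 + m) := Iff.rfl

theorem pt_mem_square {o w : ℤ × ℤ} {m : ℤ} : pt w ∈ square o m ↔ InSquare o m w := by
  rw [mem_square, InSquare]
  simp only [pt]
  norm_cast

theorem CellIn.cell_subset {o p : ℤ × ℤ} {m : ℤ} (h : CellIn o m p) : cell p ⊆ square o m := by
  obtain ⟨⟨h1, h2⟩, h3, h4⟩ := h
  rify at h1 h2 h3 h4
  have h2' : (p.1 : ℝ) + 1 ≤ o.1 + m := by norm_cast at *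
  have h4' : (p.2 : ℝ) + 1 ≤ o.2 + m := by norm_cast at *
  exact Set.prod_mono (Set.Icc_subset_Icc h1 h2') (Set.Icc_subset_Icc h3 h4')

theorem dist_le_one_of_corner {q w : ℤ × ℤ} (h : Corner q w) {z : ℝ × ℝ} (hz : z ∈ cell q) :
    dist z (pt w) ≤ 1 := by
  rw [mem_cell] at hz
  obtain ⟨⟨h1, h2⟩, h3, h4⟩ := hz
  rw [Prod.dist_eq, max_le_iff, Real.dist_eq, Real.dist_eq, abs_le, abs_le]
  simp only [pt]
  rcases h with ⟨h | h, h' | h'⟩ <;> rw [h, h'] <;> push_cast <;>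
    exact ⟨⟨by linarith, by linarith⟩, by linarith, by linarith⟩

theorem exists_common_corner {p q : ℤ × ℤ} {z : ℝ × ℝ} (hp : z ∈ cell p) (hq : z ∈ cell q) :
    ∃ w, Corner p w ∧ Corner q w := by
  rw [mem_cell] at hp hq
  have h1 : q.1 ≤ p.1 + 1 := by rify; linarith
  have h2 : p.1 ≤ q.1 + 1 := by rify; linarith
  have h3 : q.2 ≤ p.2 + 1 := by rify; linarith
  have h4 : p.2 ≤ q.2 + 1 := by rify; linarith
  refine ⟨(max p.1 q.1, max p.2 q.2), ?_, ?_⟩ <;> unfold Corner <;> dsimp only <;> omega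

theorem Corner.reachable {q : ℤ × ℤ} {Γ : SimpleGraph (ℤ × ℤ)}
    (hΓ : ∀ u v, Corner q u → Corner q v → LatticeAdj u v → Γ.Adj u v) {w w' : ℤ × ℤ}
    (h : Corner q w) (h' : Corner q w') : Γ.Reachable w w' := by
  have hm : Corner q (w'.1, w.2) := ⟨h'.1, h.2⟩
  have key : ∀ u v, Corner q u → Corner q v → u = v ∨ LatticeAdj u v → Γ.Reachable u v := by
    rintro u v hu hv (rfl | huv)
    · rfl
    · exact (hΓ u v hu hv huv).reachable
  have h1 := h.1
  have h1' := h'.1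
  have h2 := h.2
  have h2' := h'.2
  refine (key _ _ h hm ?_).trans (key _ _ hm h' ?_) <;>
  · simp only [LatticeAdj, Prod.ext_iff, true_and, and_true]
    omega

/-- The corners of a family of cells covering a connected set and meeting it are connected. -/
theorem reachable_of_cells {A : Set (ℝ × ℝ)} (hA : IsPreconnected A) {B : Set (ℤ × ℤ)}
    (hB : ∀ q ∈ B, (cell q ∩ A).Nonempty) (hcov : ∀ z ∈ A, ∃ q ∈ B, z ∈ cell q)
    {Γ : SimpleGraph (ℤ × ℤ)}
    (hΓ : ∀ q ∈ B, ∀ u v, Corner q u → Corner q v → LatticeAdj u v → Γ.Adj u v) {u v p r : ℤ × ℤ}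
    (hp : p ∈ B) (hu : Corner p u) (hr : r ∈ B) (hv : Corner r v) : Γ.Reachable u v := by
  let C : Set (ℤ × ℤ) := {q ∈ B | ∀ w, Corner q w → Γ.Reachable u w}
  by_cases hrC : r ∈ C
  · exact hrC.2 v hv
  have hpC : p ∈ C := ⟨hp, fun w hw => hu.reachable (hΓ p hp) hw⟩
  have key := isPreconnected_closed_iff.1 hA _ _ (isClosed_iUnion_cell C)
    (isClosed_iUnion_cell (B \ C)) (fun z hz => by
      obtain ⟨q, hq, hzq⟩ := hcov z hz
      by_cases hqC : q ∈ C
      · exact Or.inl (Set.mem_biUnion hqC hzq)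
      · exact Or.inr (Set.mem_biUnion (⟨hq, hqC⟩ : q ∈ B \ C) hzq))
    (by
      obtain ⟨z, hz, hzA⟩ := hB p hp
      exact ⟨z, hzA, Set.mem_biUnion hpC hz⟩)
    (by
      obtain ⟨z, hz, hzA⟩ := hB r hr
      exact ⟨z, hzA, Set.mem_biUnion (⟨hr, hrC⟩ : r ∈ B \ C) hz⟩)
  obtain ⟨z, -, hz1, hz2⟩ := key
  simp only [Set.mem_iUnion] at hz1 hz2
  obtain ⟨q, hq, hzq⟩ := hz1
  obtain ⟨q', hqB, hzq'⟩ := hz2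
  obtain ⟨w, hw, hw'⟩ := exists_common_corner hzq hzq'
  exact absurd ⟨hqB.1, fun x hx => (hq.2 w hw).trans (hw'.reachable (hΓ q' hqB.1) hx)⟩ hqB.2

/-- Well separated continua can be coloured so that those meeting one of the given squares, which
they do not enter, get distinct colours. -/
theorem exists_colouring_of_continua {S T : Type*} [Finite S] [Finite T] {k n : ℕ} (hk : 4 ≤ k)
    (hn : 0 < n)
    (hcyc : ∀ (r : ℕ) (H : SimpleGraph (Fin r)) (emb : PlaneEmbedding H),
      emb.MaxFaceSizeLE k → emb.HasCyclicColoring n)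
    (A : S → Set (ℝ × ℝ)) (hcomp : ∀ s, IsCompact (A s)) (hconn : ∀ s, IsPreconnected (A s))
    (hsep : ∀ s s', s ≠ s' → ∀ z ∈ A s, ∀ z' ∈ A s', 4 < dist z z')
    (o : T → ℤ × ℤ) {m : ℤ} (hm : 1 ≤ m)
    (havoid : ∀ s t, ∀ z ∈ A s, z ∉ openSquare (o t) m)
    (hsq : ∀ t t' z, z ∈ square (o t) m → z ∈ square (o t') m → t = t')
    (hsep' : ∀ s t, (A s ∩ square (o t) m).Nonempty ∨
      ∀ z ∈ A s, ∀ z' ∈ square (o t) m, 4 < dist z z')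
    (hne : ∀ t, ∃ s, (A s ∩ square (o t) m).Nonempty)
    (hcard : ∀ t, {s | (A s ∩ square (o t) m).Nonempty}.ncard ≤ k) :
    ∃ c : S → Fin n, ∀ t, Set.InjOn c {s | (A s ∩ square (o t) m).Nonempty} := by
  let B : S → Set (ℤ × ℤ) := fun s => {q | (cell q ∩ A s).Nonempty ∧ ∀ t, ¬ CellIn (o t) m q}
  let V : S → Set (ℤ × ℤ) := fun s => {w | ∃ q ∈ B s, Corner q w}
  have hcov : ∀ s, ∀ z ∈ A s, ∃ q ∈ B s, z ∈ cell q := by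
    intro s z hz
    by_cases h : ∃ t, CellIn (o t) m (⌊z.1⌋, ⌊z.2⌋)
    swap
    · exact ⟨_, ⟨⟨z, mem_cell_floor z, hz⟩, fun t ht => h ⟨t, ht⟩⟩, mem_cell_floor z⟩
    obtain ⟨t, ht⟩ := h
    have hzt := ht.cell_subset (mem_cell_floor z)
    have shift : ∀ q, z ∈ cell q → ¬ CellIn (o t) m q → ∃ q ∈ B s, z ∈ cell q := by
      refine fun q hq hqt => ⟨q, ⟨⟨z, hq, hz⟩, fun t' ht' => hqt ?_⟩, hq⟩
      rwa [hsq t t' z hzt (ht'.cell_subset hq)]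
    have hnot := havoid s t z hz
    obtain ⟨⟨h1, h2⟩, h3, h4⟩ := ht
    dsimp only at h1 h2 h3 h4
    have hcell := mem_cell.1 (mem_cell_floor z)
    have h2' : z.1 < (o t).1 + m := by exact_mod_cast Int.floor_lt.1 h2
    have h4' : z.2 < (o t).2 + m := by exact_mod_cast Int.floor_lt.1 h4
    by_cases hx : z.1 = (o t).1
    · refine shift ((o t).1 - 1, ⌊z.2⌋) (mem_cell.2 ⟨?_, hcell.2⟩) fun h => ?_
      · rw [hx]
        push_cast
        constructor <;> linarith
      · have := h.1.1
        dsimp only at this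
        omega
    by_cases hy : z.2 = (o t).2
    · refine shift (⌊z.1⌋, (o t).2 - 1) (mem_cell.2 ⟨hcell.1, ?_⟩) fun h => ?_
      · rw [hy]
        push_cast
        constructor <;> linarith
      · have := h.2.1
        dsimp only at this
        omega
    · exact absurd ⟨⟨lt_of_le_of_ne hzt.1.1 (Ne.symm hx), h2'⟩,
        lt_of_le_of_ne hzt.2.1 (Ne.symm hy), h4'⟩ hnot
  have hnear : ∀ s, ∀ w ∈ V s, ∃ z ∈ A s, dist z (pt w) ≤ 1 := by
    rintro s w ⟨q, ⟨⟨z, hz, hzA⟩, -⟩, hw⟩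
    exact ⟨z, hzA, dist_le_one_of_corner hw hz⟩
  have hVopen : ∀ s t, ∀ w ∈ V s, ¬ InOpenSquare (o t) m w := by
    rintro s t w ⟨q, hq, hw⟩ hwt
    refine hq.2 t ?_
    simp only [CellIn, InOpenSquare, Corner] at *
    omega
  have hiff : ∀ s t, (∃ w ∈ V s, OnRing (o t) m w) ↔ (A s ∩ square (o t) m).Nonempty := by
    intro s t
    constructor
    · rintro ⟨w, hw, hwt⟩
      refine (hsep' s t).resolve_right fun h => ?_
      obtain ⟨z, hz, hzw⟩ := hnear s w hw
      have := h z hz (pt w) (pt_mem_square.2 hwt.1)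
      linarith
    · rintro ⟨z, hz, hzt⟩
      obtain ⟨q, hq, hzq⟩ := hcov s z hz
      rw [mem_cell] at hzq
      rw [mem_square] at hzt
      have h1 : q.1 ≤ (o t).1 + m := by rify; linarith
      have h2 : (o t).1 ≤ q.1 + 1 := by rify; linarith
      have h3 : q.2 ≤ (o t).2 + m := by rify; linarith
      have h4 : (o t).2 ≤ q.2 + 1 := by rify; linarith
      have hcor : Corner q (max q.1 (o t).1, max q.2 (o t).2) := by
        simp only [Corner]
        omega
      have hV : (max q.1 (o t).1, max q.2 (o t).2) ∈ V s := ⟨q, hq, hcor⟩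
      refine ⟨_, hV, ?_, hVopen s t _ hV⟩
      simp only [InSquare]
      omega
  simp only [← hiff] at hne hcard ⊢
  refine exists_colouring_of_squares hk hn hcyc V (fun s => ?_) (fun s Γ hΓ u hu v hv => ?_)
    (fun s s' w hw hw' => ?_) o hm hVopen (fun t t' w h h' => ?_) hne hcard
  · obtain ⟨r, hr⟩ := (hcomp s).isBounded.subset_closedBall 0
    obtain ⟨N, hN⟩ := exists_int_gt (r + 1)
    refine (Set.finite_Icc ((-N, -N) : ℤ × ℤ) (N, N)).subset fun w hw => ?_
    obtain ⟨z, hz, hzw⟩ := hnear s w hw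
    have h0 : dist (pt w) 0 ≤ N := by
      have := dist_triangle_left (pt w) 0 z
      have := Metric.mem_closedBall.1 (hr hz)
      linarith
    rw [Prod.dist_eq, max_le_iff, Real.dist_eq, Real.dist_eq, abs_le, abs_le] at h0
    simp only [pt, Prod.fst_zero, Prod.snd_zero, sub_zero] at h0
    norm_cast at h0
    exact ⟨⟨h0.1.1, h0.2.1⟩, h0.1.2, h0.2.2⟩
  · obtain ⟨p, hp, hpu⟩ := hu
    obtain ⟨r, hr, hrv⟩ := hv
    exact reachable_of_cells (hconn s) (fun q hq => hq.1) (hcov s)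
      (fun q hq a b ha hb => hΓ a ⟨q, hq, ha⟩ b ⟨q, hq, hb⟩) hp hpu hr hrv
  · by_contra hss
    obtain ⟨z, hz, hzw⟩ := hnear s w hw
    obtain ⟨z', hz', hzw'⟩ := hnear s' w hw'
    have := hsep s s' hss z hz z' hz'
    have := dist_triangle_right z z' (pt w)
    linarith
  · exact hsq t t' (pt w) (pt_mem_square.2 h) (pt_mem_square.2 h')

theorem isCompact_square (o : ℤ × ℤ) (m : ℤ) : IsCompact (square o m) :=
  isCompact_Icc.prod isCompact_Icc

theorem isOpen_openSquare (o : ℤ × ℤ) (m : ℤ) : IsOpen (openSquare o m) :=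
  isOpen_Ioo.prod isOpen_Ioo

theorem openSquare_subset_square (o : ℤ × ℤ) (m : ℤ) : openSquare o m ⊆ square o m :=
  Set.prod_mono Set.Ioo_subset_Icc_self Set.Ioo_subset_Icc_self

theorem smul_mem_square {L : ℕ} (hL : 0 < L) {o : ℤ × ℤ} {m : ℤ} {z : ℝ × ℝ} :
    (L : ℝ) • z ∈ square (L * o.1, L * o.2) (L * m) ↔ z ∈ square o m := by
  have hL' : (0 : ℝ) < L := by exact_mod_cast hL
  simp only [mem_square, Prod.smul_fst, Prod.smul_snd, smul_eq_mul, Int.cast_mul, Int.cast_natCast,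
    ← mul_add, mul_le_mul_iff_right₀ hL']

theorem smul_mem_openSquare {L : ℕ} (hL : 0 < L) {o : ℤ × ℤ} {m : ℤ} {z : ℝ × ℝ} :
    (L : ℝ) • z ∈ openSquare (L * o.1, L * o.2) (L * m) ↔ z ∈ openSquare o m := by
  have hL' : (0 : ℝ) < L := by exact_mod_cast hL
  simp only [openSquare, Set.mem_prod, Set.mem_Ioo, Prod.smul_fst, Prod.smul_snd, smul_eq_mul,
    Int.cast_mul, Int.cast_natCast, ← mul_add, mul_lt_mul_iff_right₀ hL']

theorem exists_smul_eq {L : ℕ} (hL : 0 < L) (z : ℝ × ℝ) : ∃ y : ℝ × ℝ, (L : ℝ) • y = z :=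
  ⟨(L : ℝ)⁻¹ • z, smul_inv_smul₀ (by positivity) z⟩

/-- Disjoint compact sets become arbitrarily far apart under large dilations. -/
theorem eventually_lt_dist_smul {A B : Set (ℝ × ℝ)} (hA : IsCompact A) (hB : IsCompact B)
    (hAB : Disjoint A B) (r : ℝ) :
    ∀ᶠ L : ℕ in Filter.atTop, ∀ z ∈ A, ∀ z' ∈ B, r < dist ((L : ℝ) • z) ((L : ℝ) • z') := by
  obtain ⟨δ, hδ, hd⟩ := Metric.exists_pos_forall_lt_edist hA hB.isClosed hAB
  have hδ' : (0 : ℝ) < δ := hδ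
  filter_upwards [(tendsto_natCast_atTop_atTop (R := ℝ)).eventually_gt_atTop (r / δ),
    Filter.eventually_gt_atTop 0] with L hL hL0 z hz z' hz'
  have h := hd z hz z' hz'
  rw [edist_nndist, ENNReal.coe_lt_coe, ← NNReal.coe_lt_coe, coe_nndist] at h
  have hLpos : (0 : ℝ) < L := by exact_mod_cast hL0
  rw [dist_smul₀, Real.norm_of_nonneg hLpos.le]
  rw [div_lt_iff₀ hδ'] at hL
  exact hL.trans (mul_lt_mul_of_pos_left h hLpos)

/-- Disjoint continua can be coloured so that those meeting one of the given squares, which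
they do not enter, get distinct colours. -/
theorem exists_colouring_of_disjoint {S T : Type*} [Finite S] [Finite T] {k n : ℕ} (hk : 4 ≤ k)
    (hn : 0 < n)
    (hcyc : ∀ (r : ℕ) (H : SimpleGraph (Fin r)) (emb : PlaneEmbedding H),
      emb.MaxFaceSizeLE k → emb.HasCyclicColoring n)
    (A : S → Set (ℝ × ℝ)) (hcomp : ∀ s, IsCompact (A s)) (hconn : ∀ s, IsPreconnected (A s))
    (hdisj : ∀ s s', s ≠ s' → Disjoint (A s) (A s'))
    (o : T → ℤ × ℤ) {m : ℤ} (hm : 1 ≤ m)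
    (havoid : ∀ s t, ∀ z ∈ A s, z ∉ openSquare (o t) m)
    (hsq : ∀ t t' z, z ∈ square (o t) m → z ∈ square (o t') m → t = t')
    (hne : ∀ t, ∃ s, (A s ∩ square (o t) m).Nonempty)
    (hcard : ∀ t, {s | (A s ∩ square (o t) m).Nonempty}.ncard ≤ k) :
    ∃ c : S → Fin n, ∀ t, Set.InjOn c {s | (A s ∩ square (o t) m).Nonempty} := by
  have hev : ∀ᶠ L : ℕ in Filter.atTop, ∀ s s', s ≠ s' → ∀ z ∈ A s, ∀ z' ∈ A s',
      4 < dist ((L : ℝ) • z) ((L : ℝ) • z') := by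
    simp only [Filter.eventually_all]
    exact fun s s' h => eventually_lt_dist_smul (hcomp s) (hcomp s') (hdisj s s' h) 4
  have hev' : ∀ᶠ L : ℕ in Filter.atTop, ∀ s t, ¬ (A s ∩ square (o t) m).Nonempty →
      ∀ z ∈ A s, ∀ z' ∈ square (o t) m, 4 < dist ((L : ℝ) • z) ((L : ℝ) • z') := by
    simp only [Filter.eventually_all]
    exact fun s t h => eventually_lt_dist_smul (hcomp s) (isCompact_square _ _)
      (Set.disjoint_iff_inter_eq_empty.2 (Set.not_nonempty_iff_eq_empty.1 h)) 4
  obtain ⟨L, hL, hL', hL0⟩ := (hev.and (hev'.and (Filter.eventually_gt_atTop 0))).exists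
  have hiff : ∀ s t, ((fun z => (L : ℝ) • z) '' A s ∩
      square (L * (o t).1, L * (o t).2) (L * m)).Nonempty ↔ (A s ∩ square (o t) m).Nonempty := by
    intro s t
    constructor
    · rintro ⟨_, ⟨z, hz, rfl⟩, hzt⟩
      exact ⟨z, hz, (smul_mem_square hL0).1 hzt⟩
    · rintro ⟨z, hz, hzt⟩
      exact ⟨_, ⟨z, hz, rfl⟩, (smul_mem_square hL0).2 hzt⟩
  have hcont : Continuous fun z : ℝ × ℝ => (L : ℝ) • z := continuous_const_smul _
  have key := exists_colouring_of_continua hk hn hcyc (fun s => (fun z => (L : ℝ) • z) '' A s)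
    (fun s => (hcomp s).image hcont) (fun s => (hconn s).image _ hcont.continuousOn) ?_
    (fun t => (L * (o t).1, L * (o t).2)) (m := L * m) ?_ ?_ ?_ ?_ ?_ ?_
  · simpa only [hiff] using key
  · rintro s s' h _ ⟨z, hz, rfl⟩ _ ⟨z', hz', rfl⟩
    exact hL s s' h z hz z' hz'
  · have : (1 : ℤ) ≤ L := by exact_mod_cast hL0
    nlinarith
  · rintro s t _ ⟨z, hz, rfl⟩
    rw [smul_mem_openSquare hL0]
    exact havoid s t z hz
  · intro t t' z h h'
    obtain ⟨y, rfl⟩ := exists_smul_eq hL0 z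
    exact hsq t t' y ((smul_mem_square hL0).1 h) ((smul_mem_square hL0).1 h')
  · intro s t
    rw [hiff, or_iff_not_imp_left]
    rintro h _ ⟨z, hz, rfl⟩ z' hz'
    obtain ⟨y, rfl⟩ := exists_smul_eq hL0 z'
    exact hL' s t h z hz y ((smul_mem_square hL0).1 hz')
  · simpa only [hiff] using hne
  · simpa only [hiff] using hcard

/-- A path ending in an open set contained in a closed set, and starting outside the closed set,
has an initial part that reaches the closed set but avoids the open one. -/
theorem exists_first_hit {X : Type*} [TopologicalSpace X] {γ : ℝ → X}
    (hγ : ContinuousOn γ (Set.Icc 0 1)) {Q O : Set X} (hQ : IsClosed Q) (hO : IsOpen O)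
    (hOQ : O ⊆ Q) (h0 : γ 0 ∉ Q) (h1 : γ 1 ∈ O) :
    ∃ τ ∈ Set.Ico (0 : ℝ) 1, γ τ ∈ Q ∧ ∀ a ∈ Set.Icc 0 τ, γ a ∉ O := by
  obtain ⟨τ, hτ, hmin⟩ := (isCompact_Icc.of_isClosed_subset
    (hγ.preimage_isClosed_of_isClosed isClosed_Icc hQ) Set.inter_subset_left).exists_isLeast
    ⟨1, Set.right_mem_Icc.2 zero_le_one, hOQ h1⟩
  have hτ0 : 0 ≠ τ := by
    rintro rfl
    exact h0 hτ.2
  have hcl : ∀ a ∈ Set.Icc 0 τ, γ a ∉ O := by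
    have hc : ContinuousOn γ (closure (Set.Ico 0 τ)) := by
      rw [closure_Ico hτ0]
      exact hγ.mono (Set.Icc_subset_Icc_right hτ.1.2)
    have hsub := hc.image_closure
    rw [closure_Ico hτ0] at hsub
    intro a ha
    refine closure_minimal ?_ hO.isClosed_compl (hsub ⟨a, ha, rfl⟩)
    rintro _ ⟨b, hb, rfl⟩ hbO
    exact absurd (hmin ⟨⟨hb.1, hb.2.le.trans hτ.1.2⟩, hOQ hbO⟩) (not_le.2 hb.2)
  refine ⟨τ, ⟨hτ.1.1, lt_of_le_of_ne hτ.1.2 ?_⟩, hτ.2, hcl⟩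
  rintro rfl
  exact hcl 1 (Set.right_mem_Icc.2 hτ.1.1) h1

theorem mem_openSquare_floor (z : ℝ × ℝ) : z ∈ openSquare (⌊z.1⌋ - 1, ⌊z.2⌋ - 1) 3 := by
  have h1 := Int.floor_le z.1
  have h2 := Int.lt_floor_add_one z.1
  have h3 := Int.floor_le z.2
  have h4 := Int.lt_floor_add_one z.2
  refine ⟨⟨?_, ?_⟩, ?_, ?_⟩ <;> push_cast <;> linarith

theorem dist_le_two_of_mem_square {z w : ℝ × ℝ} (h : w ∈ square (⌊z.1⌋ - 1, ⌊z.2⌋ - 1) 3) :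
    dist w z ≤ 2 := by
  have h1 := Int.floor_le z.1
  have h2 := Int.lt_floor_add_one z.1
  have h3 := Int.floor_le z.2
  have h4 := Int.lt_floor_add_one z.2
  rw [mem_square] at h
  push_cast at h
  rw [Prod.dist_eq, max_le_iff, Real.dist_eq, Real.dist_eq, abs_le, abs_le]
  refine ⟨⟨?_, ?_⟩, ?_, ?_⟩ <;> linarith

/-- Colouring the centres of stars drawn in the plane, when the leaves are far from each other
and from the paths not ending in them. -/
theorem exists_colouring_of_far_stars {S T : Type*} [Finite S] [Finite T] {k n : ℕ} (hk : 4 ≤ k)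
    (hn : 0 < n)
    (hcyc : ∀ (r : ℕ) (H : SimpleGraph (Fin r)) (emb : PlaneEmbedding H),
      emb.MaxFaceSizeLE k → emb.HasCyclicColoring n)
    (R : S → T → Prop) (p : S → ℝ × ℝ) (q : T → ℝ × ℝ) (γ : S → T → ℝ → ℝ × ℝ)
    (hγ : ∀ s t, R s t → ContinuousOn (γ s t) (Set.Icc 0 1))
    (hγ0 : ∀ s t, R s t → γ s t 0 = p s) (hγ1 : ∀ s t, R s t → γ s t 1 = q t)
    (X : S → Set (ℝ × ℝ)) (hpX : ∀ s, p s ∈ X s)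
    (hγX : ∀ s t, R s t → ∀ a ∈ Set.Ico (0 : ℝ) 1, γ s t a ∈ X s)
    (hX : ∀ s s', s ≠ s' → Disjoint (X s) (X s'))
    (hpq : ∀ s t, 2 < dist (p s) (q t))
    (hγq : ∀ s t t', R s t' → t ≠ t' → ∀ a ∈ Set.Icc (0 : ℝ) 1, 2 < dist (γ s t' a) (q t))
    (hq : ∀ t t', t ≠ t' → 4 < dist (q t) (q t'))
    (hne : ∀ t, ∃ s, R s t) (hcard : ∀ t, {s | R s t}.ncard ≤ k) :
    ∃ c : S → Fin n, ∀ t, Set.InjOn c {s | R s t} := by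
  let o : T → ℤ × ℤ := fun t => (⌊(q t).1⌋ - 1, ⌊(q t).2⌋ - 1)
  have ho : ∀ t z, z ∈ square (o t) 3 → dist z (q t) ≤ 2 := fun t z => dist_le_two_of_mem_square
  have hpo : ∀ s t, p s ∉ square (o t) 3 := fun s t h => absurd (ho t _ h) (not_le.2 (hpq s t))
  have hhit : ∀ s t, R s t → ∃ τ ∈ Set.Ico (0 : ℝ) 1, γ s t τ ∈ square (o t) 3 ∧
      ∀ a ∈ Set.Icc 0 τ, γ s t a ∉ openSquare (o t) 3 := by
    intro s t h
    refine exists_first_hit (hγ s t h) (isCompact_square _ _).isClosed (isOpen_openSquare _ _)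
      (openSquare_subset_square _ _) ?_ ?_
    · rw [hγ0 s t h]
      exact hpo s t
    · rw [hγ1 s t h]
      exact mem_openSquare_floor _
  choose! τ hτ hτQ hτO using hhit
  let A : S → Set (ℝ × ℝ) := fun s => insert (p s) (⋃ t, ⋃ _ : R s t, γ s t '' Set.Icc 0 (τ s t))
  have hmem : ∀ s z, z ∈ A s ↔ z = p s ∨ ∃ t, R s t ∧ ∃ a ∈ Set.Icc 0 (τ s t), γ s t a = z := by
    intro s z
    simp only [A, Set.mem_insert_iff, Set.mem_iUnion, Set.mem_image, exists_prop]
  have hcontτ : ∀ s t, R s t → ContinuousOn (γ s t) (Set.Icc 0 (τ s t)) := fun s t h =>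
    (hγ s t h).mono (Set.Icc_subset_Icc_right (hτ s t h).2.le)
  have hAX : ∀ s, A s ⊆ X s := by
    intro s z hz
    rcases (hmem s z).1 hz with rfl | ⟨t, h, a, ha, rfl⟩
    · exact hpX s
    · exact hγX s t h a ⟨ha.1, ha.2.trans_lt (hτ s t h).2⟩
  have hfar : ∀ s t t', R s t' → t ≠ t' → ∀ a ∈ Set.Icc 0 (τ s t'), γ s t' a ∉ square (o t) 3 :=
    fun s t t' h htt a ha hz => absurd (ho t _ hz)
      (not_le.2 (hγq s t t' h htt a ⟨ha.1, ha.2.trans (hτ s t' h).2.le⟩))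
  have hiff : ∀ s t, (A s ∩ square (o t) 3).Nonempty ↔ R s t := by
    intro s t
    constructor
    · rintro ⟨z, hz, hzt⟩
      rcases (hmem s z).1 hz with rfl | ⟨t', h, a, ha, rfl⟩
      · exact absurd hzt (hpo s t)
      · by_cases htt : t = t'
        · rwa [htt]
        · exact absurd hzt (hfar s t t' h htt a ha)
    · exact fun h => ⟨_, (hmem s _).2 (Or.inr
        ⟨t, h, τ s t, Set.right_mem_Icc.2 (hτ s t h).1, rfl⟩), hτQ s t h⟩
  have key := exists_colouring_of_disjoint hk hn hcyc A ?_ ?_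
    (fun s s' h => (hX s s' h).mono (hAX s) (hAX s')) o (m := 3) (by norm_num) ?_ ?_ ?_ ?_
  · simpa only [hiff] using key
  · exact fun s => (isCompact_iUnion fun t => isCompact_iUnion fun h =>
      isCompact_Icc.image_of_continuousOn (hcontτ s t h)).insert _
  · intro s
    refine isPreconnected_of_forall (p s) fun z hz => ?_
    rcases (hmem s z).1 hz with rfl | ⟨t, h, a, ha, rfl⟩
    · exact ⟨{p s}, by simp [hz], rfl, rfl, isPreconnected_singleton⟩
    · refine ⟨γ s t '' Set.Icc 0 (τ s t), ?_,
        ⟨0, Set.left_mem_Icc.2 (hτ s t h).1, hγ0 s t h⟩, ⟨a, ha, rfl⟩,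
        isPreconnected_Icc.image _ (hcontτ s t h)⟩
      rintro _ ⟨b, hb, rfl⟩
      exact (hmem s _).2 (Or.inr ⟨t, h, b, hb, rfl⟩)
  · intro s t z hz hzt
    rcases (hmem s z).1 hz with rfl | ⟨t', h, a, ha, rfl⟩
    · exact hpo s t (openSquare_subset_square _ _ hzt)
    · by_cases htt : t = t'
      · subst htt
        exact hτO s t h a ha hzt
      · exact hfar s t t' h htt a ha (openSquare_subset_square _ _ hzt)
  · intro t t' z h h'
    by_contra htt
    have := hq t t' htt
    have := dist_triangle_left (q t) (q t') z
    have := ho t z h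
    have := ho t' z h'
    linarith
  · simpa only [hiff] using hne
  · simpa only [hiff] using hcard

/-- Colouring the centres of stars drawn in the plane, so that centres with a common leaf get
distinct colours. -/
theorem exists_colouring_of_stars {S T : Type*} [Finite S] [Finite T] {k n : ℕ} (hk : 4 ≤ k)
    (hn : 0 < n)
    (hcyc : ∀ (r : ℕ) (H : SimpleGraph (Fin r)) (emb : PlaneEmbedding H),
      emb.MaxFaceSizeLE k → emb.HasCyclicColoring n)
    (R : S → T → Prop) (p : S → ℝ × ℝ) (q : T → ℝ × ℝ) (γ : S → T → ℝ → ℝ × ℝ)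
    (hγ : ∀ s t, R s t → ContinuousOn (γ s t) (Set.Icc 0 1))
    (hγ0 : ∀ s t, R s t → γ s t 0 = p s) (hγ1 : ∀ s t, R s t → γ s t 1 = q t)
    (X : S → Set (ℝ × ℝ)) (hpX : ∀ s, p s ∈ X s)
    (hγX : ∀ s t, R s t → ∀ a ∈ Set.Ico (0 : ℝ) 1, γ s t a ∈ X s)
    (hX : ∀ s s', s ≠ s' → Disjoint (X s) (X s'))
    (hqX : ∀ s t, q t ∉ X s) (hq : Function.Injective q)
    (hne : ∀ t, ∃ s, R s t) (hcard : ∀ t, {s | R s t}.ncard ≤ k) :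
    ∃ c : S → Fin n, ∀ t, Set.InjOn c {s | R s t} := by
  have hpq : ∀ᶠ L : ℕ in Filter.atTop, ∀ s t, ∀ z ∈ ({p s} : Set (ℝ × ℝ)), ∀ z' ∈
      ({q t} : Set (ℝ × ℝ)), 2 < dist ((L : ℝ) • z) ((L : ℝ) • z') := by
    simp only [Filter.eventually_all]
    refine fun s t => eventually_lt_dist_smul isCompact_singleton isCompact_singleton
      (Set.disjoint_singleton.2 fun h => hqX s t ?_) 2
    rw [← h]
    exact hpX s
  have hγq : ∀ᶠ L : ℕ in Filter.atTop, ∀ s t t', R s t' → t ≠ t' →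
      ∀ z ∈ (γ s t') '' Set.Icc 0 1, ∀ z' ∈ ({q t} : Set (ℝ × ℝ)),
      2 < dist ((L : ℝ) • z) ((L : ℝ) • z') := by
    simp only [Filter.eventually_all]
    refine fun s t t' h htt => eventually_lt_dist_smul
      (isCompact_Icc.image_of_continuousOn (hγ s t' h)) isCompact_singleton
      (Set.disjoint_singleton_right.2 ?_) 2
    rintro ⟨a, ha, haq⟩
    rcases ha.2.lt_or_eq with ha1 | rfl
    · exact hqX s t (haq ▸ hγX s t' h a ⟨ha.1, ha1⟩)
    · rw [hγ1 s t' h] at haq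
      exact htt (hq haq.symm)
  have hqq : ∀ᶠ L : ℕ in Filter.atTop, ∀ t t', t ≠ t' → ∀ z ∈ ({q t} : Set (ℝ × ℝ)), ∀ z' ∈
      ({q t'} : Set (ℝ × ℝ)), 4 < dist ((L : ℝ) • z) ((L : ℝ) • z') := by
    simp only [Filter.eventually_all]
    exact fun t t' h => eventually_lt_dist_smul isCompact_singleton isCompact_singleton
      (Set.disjoint_singleton.2 (hq.ne h)) 4
  obtain ⟨L, hL1, hL2, hL3, hL0⟩ :=
    (hpq.and (hγq.and (hqq.and (Filter.eventually_gt_atTop 0)))).exists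
  have hL0' : (L : ℝ) ≠ 0 := by positivity
  exact exists_colouring_of_far_stars hk hn hcyc R (fun s => (L : ℝ) • p s)
    (fun t => (L : ℝ) • q t) (fun s t a => (L : ℝ) • γ s t a)
    (fun s t h => (continuous_const_smul (L : ℝ)).comp_continuousOn (hγ s t h))
    (fun s t h => by rw [hγ0 s t h]) (fun s t h => by rw [hγ1 s t h])
    (fun s => (fun z => (L : ℝ) • z) '' X s)
    (fun s => ⟨_, hpX s, rfl⟩) (fun s t h a ha => ⟨_, hγX s t h a ha, rfl⟩)
    (fun s s' h => (Set.disjoint_image_iff (smul_right_injective _ hL0')).2 (hX s s' h))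
    (fun s t => hL1 s t _ rfl _ rfl)
    (fun s t t' h htt a ha => hL2 s t t' h htt _ ⟨a, ha, rfl⟩ _ rfl)
    (fun t t' h => hL3 t t' h _ rfl _ rfl) hne hcard

end GridMap

/-- The arc of an edge `uv`, directed from `u` to `v`. -/
theorem PlaneEmbedding.exists_directed_arc {V : Type*} {G : SimpleGraph V} (emb : PlaneEmbedding G)
    {u v : V} (h : G.Adj u v) : ∃ γ : ℝ → ℝ × ℝ, ContinuousOn γ (Set.Icc 0 1) ∧ γ 0 = emb.pos u ∧
      γ 1 = emb.pos v ∧ ∀ a ∈ Set.Ioo (0 : ℝ) 1, ∃ b ∈ Set.Ioo (0 : ℝ) 1,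
        γ a = emb.arc ⟨s(u, v), h⟩ b := by
  obtain ⟨x, y, hxy, h0, h1⟩ := emb.arc_ends ⟨s(u, v), h⟩
  rcases Sym2.eq_iff.1 hxy with ⟨rfl, rfl⟩ | ⟨rfl, rfl⟩
  · exact ⟨_, emb.arc_cont _, h0, h1, fun a ha => ⟨a, ha, rfl⟩⟩
  · refine ⟨fun a => emb.arc ⟨s(u, v), h⟩ (1 - a), ?_, by simpa using h1, by simpa using h0,
      fun a ha => ⟨1 - a, ⟨by linarith [ha.2], by linarith [ha.1]⟩, rfl⟩⟩
    exact (emb.arc_cont _).comp (by fun_prop)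
      fun a ha => ⟨by linarith [ha.2], by linarith [ha.1]⟩

/-- In a planar graph, an independent set containing at most `k` neighbours of every vertex can be
coloured so that vertices with a common neighbour get distinct colours. -/
theorem PlaneEmbedding.exists_colouring_of_independent {V : Type*} [Finite V] {G : SimpleGraph V}
    (emb : PlaneEmbedding G) {k n : ℕ} (hk : 4 ≤ k) (hn : 0 < n)
    (hcyc : ∀ (r : ℕ) (H : SimpleGraph (Fin r)) (emb : PlaneEmbedding H),
      emb.MaxFaceSizeLE k → emb.HasCyclicColoring n)
    (I : Set V) (hI : ∀ u ∈ I, ∀ v ∈ I, ¬ G.Adj u v)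
    (hcard : ∀ v, {u | G.Adj v u ∧ u ∈ I}.ncard ≤ k) :
    ∃ c : V → Fin n, ∀ u ∈ I, ∀ v ∈ I, ∀ w, G.Adj u w → G.Adj v w → c u = c v → u = v := by
  let T : Set V := {t | ∃ s ∈ I, G.Adj s t}
  have harc : ∀ (s : I) (t : T), G.Adj s t → ∃ γ : ℝ → ℝ × ℝ, ContinuousOn γ (Set.Icc 0 1) ∧
      γ 0 = emb.pos s ∧ γ 1 = emb.pos t ∧ ∀ a ∈ Set.Ioo (0 : ℝ) 1, ∃ e : G.edgeSet,
        (s : V) ∈ (e : Sym2 V) ∧ ∃ b ∈ Set.Ioo (0 : ℝ) 1, γ a = emb.arc e b := by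
    intro s t h
    obtain ⟨γ, h1, h2, h3, h4⟩ := emb.exists_directed_arc h
    exact ⟨γ, h1, h2, h3, fun a ha => ⟨⟨_, h⟩, Sym2.mem_mk_left _ _, h4 a ha⟩⟩
  choose! γ hγ hγ0 hγ1 hγe using harc
  let X : I → Set (ℝ × ℝ) := fun s => {z | z = emb.pos s ∨ ∃ e : G.edgeSet,
    (s : V) ∈ (e : Sym2 V) ∧ ∃ b ∈ Set.Ioo (0 : ℝ) 1, z = emb.arc e b}
  have key := GridMap.exists_colouring_of_stars hk hn hcyc
    (fun (s : I) (t : T) => G.Adj s t) (fun s => emb.pos s) (fun t => emb.pos t) γ hγ hγ0 hγ1 X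
    (fun s => Or.inl rfl) ?_ ?_ ?_ (emb.inj.comp Subtype.val_injective) ?_ ?_
  · classical
    obtain ⟨c, hc⟩ := key
    refine ⟨fun v => if h : v ∈ I then c ⟨v, h⟩ else ⟨0, hn⟩, fun u hu v hv w huw hvw huv => ?_⟩
    simp only [hu, hv, dif_pos] at huv
    exact congrArg Subtype.val (hc ⟨w, u, hu, huw⟩ huw hvw huv)
  · intro s t h a ha
    rcases ha.1.eq_or_lt with rfl | ha0
    · exact Or.inl (hγ0 s t h)
    · exact Or.inr (hγe s t h a ⟨ha0, ha.2⟩)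
  · intro s s' hss
    rw [Set.disjoint_left]
    rintro z (rfl | ⟨e, he, b, hb, rfl⟩) (hz | ⟨f, hf, b', hb', hz⟩)
    · exact hss (Subtype.ext (emb.inj hz))
    · exact emb.arc_avoid f b' hb' ⟨_, hz⟩
    · exact emb.arc_avoid e b hb ⟨_, hz.symm⟩
    · by_cases hef : e = f
      · subst hef
        have hee : (e : Sym2 V) = s((s : V), (s' : V)) :=
          (Sym2.mem_and_mem_iff fun h => hss (Subtype.ext h)).1 ⟨he, hf⟩
        have hmem := e.2
        rw [hee, mem_edgeSet] at hmem
        exact hI s s.2 s' s'.2 hmem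
      · exact emb.arc_disjoint e f hef b hb b' hb' hz
  · rintro s ⟨t, s', hs', hadj⟩ (hz | ⟨e, -, b, hb, hz⟩)
    · have ht : t = s := emb.inj hz
      subst ht
      exact hI s' hs' s s.2 hadj
    · exact emb.arc_avoid e b hb ⟨_, hz⟩
  · rintro ⟨t, s, hs, hadj⟩
    exact ⟨⟨s, hs⟩, hadj⟩
  · intro t
    refine le_trans ?_ (hcard t)
    refine Set.ncard_le_ncard_of_injOn Subtype.val (fun s hs => ⟨Adj.symm hs, s.2⟩)
      Subtype.val_injective.injOn (Set.toFinite _)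

namespace SimpleGraph

variable {V : Type*} {G : SimpleGraph V}

theorem isFrugalColoring_one_iff [Finite V] {α : Type*} {c : V → α} :
    G.IsFrugalColoring 1 c ↔ ∀ u v, G.square.Adj u v → c u ≠ c v := by
  simp only [IsFrugalColoring, square, fromRel_adj, Set.ncard_le_one (Set.toFinite _),
    mem_neighborSet, Set.mem_ofPred_eq]
  constructor
  · rintro ⟨h1, h2⟩ u v ⟨huv, (h | ⟨w, h, h'⟩) | (h | ⟨w, h, h'⟩)⟩ hc
    · exact h1 u v h hc
    · exact huv (h2 w (c v) u ⟨h.symm, hc⟩ v ⟨h', rfl⟩)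
    · exact h1 v u h hc.symm
    · exact huv (h2 w (c v) u ⟨h', hc⟩ v ⟨h.symm, rfl⟩)
  · refine fun h => ⟨fun u v huv => h u v ⟨huv.ne, Or.inl (Or.inl huv)⟩,
      fun w a u hu v hv => ?_⟩
    by_contra huv
    exact h u v ⟨huv, Or.inl (Or.inr ⟨w, hu.1.symm, hv.1⟩)⟩ (hu.2.trans hv.2.symm)

theorem exists_frugalColoring [Finite V] {k : ℕ} (hk : 1 ≤ k) :
    ∃ c : V → ℕ, (∀ v, c v < G.frugalChromaticNumber k) ∧ G.IsFrugalColoring k c := by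
  refine Nat.sInf_mem (s := {n : ℕ | ∃ c : V → ℕ, (∀ v, c v < n) ∧ G.IsFrugalColoring k c}) ?_
  obtain ⟨n, ⟨e⟩⟩ := Finite.exists_equiv_fin V
  have hinj : Function.Injective fun v => (e v : ℕ) := Fin.val_injective.comp e.injective
  refine ⟨n, fun v => e v, fun v => (e v).2, fun u v huv => hinj.ne huv.ne, fun v a => ?_⟩
  refine le_trans ((Set.ncard_le_one (Set.toFinite _)).2 ?_) hk
  exact fun u hu w hw => hinj (hu.2.trans hw.2.symm)

theorem square_colorable_iff [Finite V] {n : ℕ} :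
    G.square.Colorable n ↔ ∃ c : V → ℕ, (∀ v, c v < n) ∧ G.IsFrugalColoring 1 c := by
  rw [colorable_iff_exists_bdd_nat_coloring]
  constructor
  · rintro ⟨C, hC⟩
    exact ⟨C, hC, isFrugalColoring_one_iff.2 fun u v h => C.valid h⟩
  · rintro ⟨c, hc, hfrugal⟩
    exact ⟨Coloring.mk c fun {u v} h => isFrugalColoring_one_iff.1 hfrugal u v h, hc⟩

theorem chromaticNumber_square [Finite V] :
    G.square.chromaticNumber = (G.frugalChromaticNumber 1 : ℕ∞) := by
  refine le_antisymm (square_colorable_iff.2 (exists_frugalColoring le_rfl)).chromaticNumber_le ?_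
  refine le_chromaticNumber_iff_colorable.2 fun n hn => ?_
  exact_mod_cast Nat.sInf_le (square_colorable_iff.1 hn)

/-- Refining each class of a `k`-frugal colouring of a planar graph by a colouring separating
vertices with a common neighbour. -/
theorem frugalChromaticNumber_one_le_mul [Finite V] {k n : ℕ} (hk : 4 ≤ k) (hn : 0 < n)
    (hcyc : ∀ (r : ℕ) (H : SimpleGraph (Fin r)) (emb : PlaneEmbedding H),
      emb.MaxFaceSizeLE k → emb.HasCyclicColoring n) (hG : G.IsPlanar) :
    G.frugalChromaticNumber 1 ≤ G.frugalChromaticNumber k * n := by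
  obtain ⟨emb⟩ := hG
  obtain ⟨c, hc, hproper, hfrugal⟩ := G.exists_frugalColoring (k := k) (by omega)
  have hclass : ∀ i, ∃ d : V → Fin n, ∀ u, c u = i → ∀ v, c v = i → ∀ w, G.Adj u w → G.Adj v w →
      d u = d v → u = v := fun i =>
    emb.exists_colouring_of_independent hk hn hcyc {v | c v = i}
      (fun u hu v hv h => hproper u v h (hu.trans hv.symm)) fun v => hfrugal v i
  choose d hd using hclass
  have hdecode : ∀ u v, c u * n + d (c u) u = c v * n + d (c v) v →
      c u = c v ∧ (d (c u) u : ℕ) = d (c v) v := by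
    intro u v h
    have hmod := congrArg (· % n) h
    simp only [Nat.mul_add_mod_self_right, Nat.mod_eq_of_lt (Fin.isLt _)] at hmod
    refine ⟨?_, hmod⟩
    rw [hmod] at h
    exact Nat.eq_of_mul_eq_mul_right hn (Nat.add_right_cancel h)
  refine Nat.sInf_le ⟨fun v => c v * n + d (c v) v, fun v => ?_, ?_⟩
  · calc c v * n + d (c v) v < c v * n + n := Nat.add_lt_add_left (Fin.isLt _) _
      _ = (c v + 1) * n := by ring
      _ ≤ _ := Nat.mul_le_mul_right _ (hc v)
  · refine ⟨fun u v huv h => hproper u v huv (hdecode u v h).1, fun w a => ?_⟩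
    refine (Set.ncard_le_one (Set.toFinite _)).2 ?_
    rintro u ⟨hu, hua⟩ v ⟨hv, hva⟩
    obtain ⟨hcuv, hduv⟩ := hdecode u v (hua.trans hva.symm)
    refine hd (c u) u rfl v hcuv.symm w (Adj.symm hu) (Adj.symm hv) (Fin.ext ?_)
    rw [hduv, hcuv]

theorem frugalChromaticNumber_one_le_one [Fintype V] [DecidableRel G.Adj] (h : G.maxDegree = 0) :
    G.frugalChromaticNumber 1 ≤ 1 := by
  have hadj : ∀ u v, ¬ G.Adj u v := by
    intro u v huv
    have hpos := G.degree_pos_iff_exists_adj u |>.2 ⟨v, huv⟩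
    have := G.degree_le_maxDegree u
    omega
  refine Nat.sInf_le ⟨fun _ => 0, fun _ => one_pos, fun u v huv => absurd huv (hadj u v), ?_⟩
  exact fun v a => (Set.ncard_le_one (Set.toFinite _)).2 fun u hu => absurd hu.1 (hadj v u)

end SimpleGraph

/-- If `k ≥ 4` is even and every plane graph with all faces of size at most `k` has a
cyclic colouring with at most `(3/2)k` colours, then every planar graph `G` with
`χ_k(G) ≤ ⌊(Δ(G) - 1)/k⌋ + 3` satisfies
`χ(G²) = χ_1(G) ≤ ⌊(3/2)Δ(G)⌋ + (9/2)k - 1`. -/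
theorem cyclic_implies_wegner (k : ℕ) (hk4 : 4 ≤ k) (hke : Even k)
    (hcyc : ∀ (n : ℕ) (H : SimpleGraph (Fin n)) (emb : PlaneEmbedding H),
      emb.MaxFaceSizeLE k → emb.HasCyclicColoring (3 * k / 2))
    {V : Type} [Fintype V] (G : SimpleGraph V) [DecidableRel G.Adj]
    (hG : G.IsPlanar)
    (hchi : G.frugalChromaticNumber k ≤ (G.maxDegree - 1) / k + 3) :
    G.square.chromaticNumber = (G.frugalChromaticNumber 1 : ℕ∞) ∧
    G.frugalChromaticNumber 1 ≤ 3 * G.maxDegree / 2 + 9 * k / 2 - 1 := by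
  refine ⟨chromaticNumber_square, ?_⟩
  by_cases hΔ : G.maxDegree = 0
  · have := frugalChromaticNumber_one_le_one hΔ
    omega
  obtain ⟨j, rfl⟩ := hke
  have hj : 3 * (j + j) / 2 = 3 * j := by omega
  rw [hj] at hcyc
  have hmul := frugalChromaticNumber_one_le_mul hk4 (by omega) hcyc hG
  have hle := Nat.mul_le_mul_right (3 * j) hchi
  have hdiv := Nat.div_mul_le_self (G.maxDegree - 1) (j + j)
  have hexp : 2 * (((G.maxDegree - 1) / (j + j) + 3) * (3 * j)) =
    3 * ((G.maxDegree - 1) / (j + j) * (j + j)) + 18 * j := by ring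
  omega
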